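/- arXiv:math/0612359 — 3 statements merged into one kernel-verified Lean document; each statement's English description precedes it below -/
import Mathlib

section
/- Let E be a complex Banach space of functions on ℝ⁺ satisfying (H1), (H2), (H3), and let T be a Wiener-Hopf operator on E. Then there exists a linear functional μ_T on C_c^∞(ℝ) which is a distribution of order 1 — i.e. for every compact K ⊂ ℝ there is a constant C_K with |⟨μ_T, f⟩| ≤ C_K (‖f‖_∞ + ‖f′‖_∞) for all f ∈ C_c^∞(ℝ) with support in K — such that for every f ∈ C_c^∞((0,∞)), (Tf)(x) = ⟨μ_T, z ↦ f(x − z)⟩ for almost every x ∈ ℝ⁺; that is, Tf = P⁺(μ_T ∗ f). -/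
open Complex Filter Topology

noncomputable section

/-- Translation by `a`, cut off to `ℝ⁺`: `(transFun a f) x = f (x - a)` for `x ≥ 0`,
and `0` for `x < 0`.  For `a ≥ 0` and `f` supported in `ℝ⁺` this is the operator `S_a`,
and for `a = -b ≤ 0` it is the operator `S_{-b} : f ↦ f (· + b)`. -/
def transFun {α : Type*} [Zero α] (a : ℝ) (f : ℝ → α) : ℝ → α :=
  fun x => if 0 ≤ x then f (x - a) else 0

/-- Modulation: `(modFun a f) x = e^{iax} f x`. -/
def modFun (a : ℝ) (f : ℝ → ℂ) : ℝ → ℂ :=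
  fun x => Complex.exp (Complex.I * (a : ℂ) * (x : ℂ)) * f x

/-- `C^∞` functions with compact support contained in `(0, ∞)`. -/
def IsTestPlus (g : ℝ → ℂ) : Prop :=
  ContDiff ℝ (⊤ : ℕ∞) g ∧ HasCompactSupport g ∧ tsupport g ⊆ Set.Ioi (0 : ℝ)

/-- `C^∞` functions with compact support on `ℝ`. -/
def IsTest (g : ℝ → ℂ) : Prop :=
  ContDiff ℝ (⊤ : ℕ∞) g ∧ HasCompactSupport g

/-- The Fourier transformation `(𝓕 f)(ξ) = (2π)^{-1/2} ∫ f x e^{-iξx} dx`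
(defined by this integral formula; it is applied below only to integrable functions,
on which it agrees with the Fourier–Plancherel transformation). -/
def FT {H : Type*} [NormedAddCommGroup H] [NormedSpace ℂ H] (f : ℝ → H) : ℝ → H :=
  fun ξ => (Real.sqrt (2 * Real.pi))⁻¹ •
    ∫ x : ℝ, Complex.exp (-(Complex.I * (ξ : ℂ) * (x : ℂ))) • f x

/-- The inverse Fourier transformation `(𝓕⁻¹ f)(x) = (2π)^{-1/2} ∫ f ξ e^{iξx} dξ`. -/
def FTinv {H : Type*} [NormedAddCommGroup H] [NormedSpace ℂ H] (f : ℝ → H) : ℝ → H :=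
  fun x => (Real.sqrt (2 * Real.pi))⁻¹ •
    ∫ ξ : ℝ, Complex.exp (Complex.I * (ξ : ℂ) * (x : ℂ)) • f ξ

/-- A complex Banach space `E` of (a.e.-equivalence classes of) locally integrable
functions on `ℝ⁺` — realized as functions on `ℝ` vanishing a.e. on `(-∞, 0)` —
satisfying the hypotheses (H1), (H2) and (H3). -/
structure WHSpace where
  /-- the carrier Banach space -/
  E : Type
  [nacg : NormedAddCommGroup E]
  [nsp : NormedSpace ℂ E]
  [cpl : CompleteSpace E]
  /-- the realization of elements of `E` as functions on `ℝ⁺`; two elements of `E`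
  coincide iff their realizations agree almost everywhere -/
  toFun : E →ₗ[ℂ] (ℝ → ℂ)
  inj : ∀ f g : E, toFun f =ᵐ[MeasureTheory.volume] toFun g → f = g
  meas : ∀ f : E, MeasureTheory.AEStronglyMeasurable (toFun f) MeasureTheory.volume
  supp : ∀ f : E, ∀ᵐ x ∂MeasureTheory.volume, x < 0 → toFun f x = 0
  /-- (H1): `E ⊆ L¹_loc` -/
  locInt : ∀ f : E, MeasureTheory.LocallyIntegrable (toFun f) MeasureTheory.volume
  /-- (H1): the inclusion `E ⊆ L¹_loc(ℝ⁺)` is continuous -/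
  incl_cont : ∀ K : Set ℝ, IsCompact K → ∃ C > 0, ∀ f : E,
    ∫ x in K, ‖toFun f x‖ ≤ C * ‖f‖
  /-- (H1): `C_c^∞((0,∞)) ⊆ E` -/
  test_mem : ∀ g : ℝ → ℂ, IsTestPlus g → ∃ f : E, toFun f =ᵐ[MeasureTheory.volume] g
  /-- (H1): the inclusion `C_c^∞((0,∞)) ⊆ E` is continuous -/
  test_cont : ∀ K : Set ℝ, IsCompact K → ∃ C > 0, ∃ N : ℕ,
    ∀ (f : E) (g : ℝ → ℂ), IsTestPlus g → tsupport g ⊆ K →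
      toFun f =ᵐ[MeasureTheory.volume] g →
      ‖f‖ ≤ C * ∑ k ∈ Finset.range (N + 1), ⨆ x : ℝ, ‖iteratedDeriv k g x‖
  /-- (H1): `C_c^∞((0,∞))` is dense in `E` -/
  test_dense : Dense {f : E | ∃ g : ℝ → ℂ, IsTestPlus g ∧ toFun f =ᵐ[MeasureTheory.volume] g}
  /-- (H2): the translations `S_a`, `a ∈ ℝ`, act boundedly on `E` -/
  S : ℝ → E →L[ℂ] E
  S_spec : ∀ (a : ℝ) (f : E), toFun (S a f) =ᵐ[MeasureTheory.volume] transFun a (toFun f)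
  /-- (H2): `sup_{a ∈ K} ‖S_a‖ < ∞` for every compact `K ⊆ ℝ` -/
  S_bdd : ∀ K : Set ℝ, IsCompact K → ∃ C : ℝ, ∀ a ∈ K, ‖S a‖ ≤ C
  /-- (H3): the modulations `Γ_a`, `a ∈ ℝ`, act boundedly on `E` -/
  Mod : ℝ → E →L[ℂ] E
  Mod_spec : ∀ (a : ℝ) (f : E), toFun (Mod a f) =ᵐ[MeasureTheory.volume] modFun a (toFun f)
  /-- (H3): `sup_{a ∈ ℝ} ‖Γ_a‖ < ∞` -/
  Mod_bdd : ∃ C : ℝ, ∀ a : ℝ, ‖Mod a‖ ≤ C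

attribute [instance] WHSpace.nacg WHSpace.nsp WHSpace.cpl

open MeasureTheory

/-- A Wiener-Hopf operator on `E`: a bounded operator `T` with `S_{-a} T S_a = T`
for all `a ≥ 0`. -/
def IsWienerHopf (W : WHSpace) (T : W.E →L[ℂ] W.E) : Prop :=
  ∀ a : ℝ, 0 ≤ a → (W.S (-a)).comp (T.comp (W.S a)) = T

/-- `ρ(S)`, the spectral radius of `S = S_1`. -/
def WHSpace.rS (W : WHSpace) : ℝ := (spectralRadius ℂ (W.S 1)).toReal

/-- `ρ(S_{-1})`, the spectral radius of `S_{-1}`. -/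
def WHSpace.rSm (W : WHSpace) : ℝ := (spectralRadius ℂ (W.S (-1))).toReal

/-- `I_E = [-ln ρ(S_{-1}), ln ρ(S)]`. -/
def WHSpace.IE (W : WHSpace) : Set ℝ := Set.Icc (-Real.log W.rSm) (Real.log W.rS)

/-- `U_E = {z ∈ ℂ : Im z ∈ I_E}`. -/
def WHSpace.UE (W : WHSpace) : Set ℂ := {z : ℂ | z.im ∈ W.IE}

/-- The open strip `int U_E = {z ∈ ℂ : -ln ρ(S_{-1}) < Im z < ln ρ(S)}`. -/
def WHSpace.stripE (W : WHSpace) : Set ℂ :=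
  {z : ℂ | z.im ∈ Set.Ioo (-Real.log W.rSm) (Real.log W.rS)}

/-- `A = T_φ`, i.e. `A f = P⁺ (φ ∗ f)` for every `f ∈ C_c^∞((0,∞))`.
(Such an operator is unique, by density of `C_c^∞((0,∞))` in `E`.) -/
def IsConvOp (W : WHSpace) (φ : ℝ → ℂ) (A : W.E →L[ℂ] W.E) : Prop :=
  ∀ (f : W.E) (g : ℝ → ℂ), IsTestPlus g → W.toFun f =ᵐ[volume] g →
    ∀ᵐ x ∂(volume.restrict (Set.Ici (0 : ℝ))),
      W.toFun (A f) x = ∫ y : ℝ, φ y * g (x - y)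

/-- `c` is the right derivative at `x` of the primitive of `w`. -/
def Rd (w : ℝ → ℂ) (x : ℝ) (c : ℂ) : Prop :=
  Tendsto (fun h : ℝ => (h : ℂ)⁻¹ * ∫ t in x..(x + h), w t) (𝓝[>] 0) (𝓝 c)

lemma Rd.unique {w : ℝ → ℂ} {x : ℝ} {c d : ℂ} (h1 : Rd w x c) (h2 : Rd w x d) : c = d :=
  tendsto_nhds_unique h1 h2

lemma rd_ae {w : ℝ → ℂ} (hw : LocallyIntegrable w volume) : ∀ᵐ x, Rd w x (w x) := by
  filter_upwards [LocallyIntegrable.ae_hasDerivAt_integral hw] with x hx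
  have h1 := (hx x).tendsto_slope_zero_right
  simpa [Rd] using h1

lemma WHSpace.ii (W : WHSpace) (u : W.E) (a b : ℝ) :
    IntervalIntegrable (W.toFun u) volume a b :=
  intervalIntegrable_iff.mpr <|
      ((W.locInt u).integrableOn_isCompact isCompact_uIcc).mono_set Set.uIoc_subset_uIcc

/-- The continuous functional `u ↦ ∫_a^b u`. -/
lemma WHSpace.exists_ell (W : WHSpace) (a b : ℝ) :
    ∃ ℓ : W.E →L[ℂ] ℂ, ∀ u, ℓ u = ∫ t in a..b, W.toFun u t := by
  obtain ⟨C, hC, h⟩ := W.incl_cont (Set.uIcc a b) isCompact_uIcc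
  let l : W.E →ₗ[ℂ] ℂ :=
    { toFun := fun u => ∫ t in a..b, W.toFun u t
      map_add' := fun u v => by
        simp only [map_add, Pi.add_apply]
        exact intervalIntegral.integral_add (W.ii u a b) (W.ii v a b)
      map_smul' := fun c u => by
        simp only [map_smul, Pi.smul_apply, RingHom.id_apply]
        exact intervalIntegral.integral_smul _ _ }
  refine ⟨l.mkContinuous C ?_, fun u => rfl⟩
  intro u
  refine le_trans ?_ (h u)
  change ‖∫ t in a..b, W.toFun u t‖ ≤ _
  refine (intervalIntegral.norm_integral_le_integral_norm_uIoc).trans ?_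
  refine setIntegral_mono_set ?_ ?_ ?_
  · exact ((W.locInt u).integrableOn_isCompact isCompact_uIcc).norm
  · exact Eventually.of_forall (fun x => norm_nonneg _)
  · exact Set.uIoc_subset_uIcc.eventuallyLE

lemma ae_add_right {p : ℝ → Prop} (h : ∀ᵐ x, p x) (c : ℝ) : ∀ᵐ x : ℝ, p (x + c) :=
  (measurePreserving_add_right volume c).quasiMeasurePreserving.ae h

/-- a.e. formula for `S_{-h} u`. -/
lemma WHSpace.S_neg_spec (W : WHSpace) (u : W.E) (h : ℝ) :
    ∀ᵐ x, 0 ≤ x → W.toFun (W.S (-h) u) x = W.toFun u (x + h) := by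
  filter_upwards [W.S_spec (-h) u] with x hx h0
  rw [hx, transFun, if_pos h0, sub_neg_eq_add]

lemma WHSpace.int_S_neg (W : WHSpace) (u : W.E) (h x y : ℝ) (hx : 0 ≤ x) (hy : 0 ≤ y) :
    ∫ t in x..y, W.toFun (W.S (-h) u) t = ∫ t in (x + h)..(y + h), W.toFun u t := by
  rw [← intervalIntegral.integral_comp_add_right]
  apply intervalIntegral.integral_congr_ae
  filter_upwards [W.S_neg_spec u h] with t ht hmem
  apply ht
  rcases Set.mem_uIoc.1 hmem with h | h <;> linarith [h.1]

/-- `S_{-h} u` is represented by `f(·+h)` if `f` is supported in `[h,∞)`. -/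
lemma WHSpace.S_neg_test (W : WHSpace) (u : W.E) (f : ℝ → ℂ) (hu : W.toFun u =ᵐ[volume] f)
    (h : ℝ) (hf : ∀ x, x < h → f x = 0) :
    W.toFun (W.S (-h) u) =ᵐ[volume] fun x => f (x + h) := by
  filter_upwards [W.S_spec (-h) u, ae_add_right hu h] with x hx h2
  rw [hx, transFun]
  split_ifs with h0
  · rw [sub_neg_eq_add, h2]
  · rw [hf _ (by linarith)]

/-- `S_h u` is represented by `f(·-h)`. -/
lemma WHSpace.S_pos_test (W : WHSpace) (u : W.E) (f : ℝ → ℂ) (hu : W.toFun u =ᵐ[volume] f)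
    (h : ℝ) (hf : ∀ x, x < -h → f x = 0) :
    W.toFun (W.S h u) =ᵐ[volume] fun x => f (x - h) := by
  have := W.S_neg_test u f hu (-h) hf
  simpa [sub_eq_add_neg] using this

lemma WHSpace.comm_neg (W : WHSpace) {T : W.E →L[ℂ] W.E} (hT : IsWienerHopf W T)
    (u : W.E) (f : ℝ → ℂ) (hu : W.toFun u =ᵐ[volume] f)
    (h : ℝ) (hh : 0 ≤ h) (hf : ∀ x, x < h → f x = 0) :
    W.S (-h) (T u) = T (W.S (-h) u) := by
  have h1 : W.S h (W.S (-h) u) = u := by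
    apply W.inj
    have h2 := W.S_neg_test u f hu h hf
    have h3 := W.S_pos_test (W.S (-h) u) _ h2 h (fun x hx => hf _ (by linarith))
    simp only [sub_add_cancel] at h3
    exact h3.trans hu.symm
  have h4 := congrArg (fun A => A (W.S (-h) u)) (hT h hh)
  simp only [ContinuousLinearMap.comp_apply, h1] at h4
  exact h4

lemma IsTestPlus.exists_Icc {f : ℝ → ℂ} (hf : IsTestPlus f) :
    ∃ α β : ℝ, 0 < α ∧ α < β ∧ tsupport f ⊆ Set.Icc α β := by
  obtain ⟨_, hc, hs⟩ := hf
  have hc' : IsCompact (tsupport f) := hc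
  rcases (tsupport f).eq_empty_or_nonempty with h | h
  · exact ⟨1, 2, by norm_num, by norm_num, by simp [h]⟩
  · obtain ⟨m, hm⟩ := hc'.exists_isLeast h
    obtain ⟨M, hM⟩ := hc'.exists_isGreatest h
    have h0 : 0 < m := hs hm.1
    have hmM : m ≤ M := hm.2 hM.1
    exact ⟨m, M + 1, h0, by linarith, fun x hx => ⟨hm.2 hx, by linarith [hM.2 hx]⟩⟩

lemma isTestPlus_of {f : ℝ → ℂ} (hf : ContDiff ℝ (⊤ : ℕ∞) f) {α β : ℝ} (hα : 0 < α)
    (hs : ∀ x, x ∉ Set.Icc α β → f x = 0) : IsTestPlus f ∧ tsupport f ⊆ Set.Icc α β := by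
  have h1 : tsupport f ⊆ Set.Icc α β := by
    apply closure_minimal _ isClosed_Icc
    intro x hx
    by_contra h
    exact hx (hs x h)
  exact ⟨⟨hf, HasCompactSupport.of_support_subset_isCompact isCompact_Icc
    ((subset_tsupport f).trans h1), fun x hx => lt_of_lt_of_le hα (h1 hx).1⟩, h1⟩

lemma zero_of_notMem {f : ℝ → ℂ} {s : Set ℝ} (h : tsupport f ⊆ s) : ∀ x, x ∉ s → f x = 0 :=
  fun _ hx => image_eq_zero_of_notMem_tsupport (fun h' => hx (h h'))

lemma IsTestPlus.deriv {f : ℝ → ℂ} (hf : IsTestPlus f) : IsTestPlus (deriv f) := by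
  obtain ⟨α, β, hα, _, hs⟩ := hf.exists_Icc
  refine (isTestPlus_of (α := α) (β := β) ?_ hα ?_).1
  · exact (contDiff_infty_iff_deriv.1 hf.1).2
  · exact zero_of_notMem (tsupport_deriv_subset.trans hs)

lemma smooth_iteratedDeriv {f : ℝ → ℂ} (hf : ContDiff ℝ (⊤ : ℕ∞) f) (k : ℕ) :
    ContDiff ℝ (⊤ : ℕ∞) (iteratedDeriv k f) := by
  induction k with
  | zero => simpa using hf
  | succ k ih => rw [iteratedDeriv_succ]; exact (contDiff_infty_iff_deriv.1 ih).2

lemma supp_iteratedDeriv {f : ℝ → ℂ} (k : ℕ) :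
    tsupport (iteratedDeriv k f) ⊆ tsupport f := by
  induction k with
  | zero => simp
  | succ k ih => rw [iteratedDeriv_succ]; exact tsupport_deriv_subset.trans ih

lemma bdd_of_compact {f : ℝ → ℂ} (hf : Continuous f) (hc : HasCompactSupport f) :
    ∃ M, 0 ≤ M ∧ ∀ x, ‖f x‖ ≤ M := by
  obtain ⟨M, hM⟩ := hf.bounded_above_of_compact_support hc
  exact ⟨M, (norm_nonneg _).trans (hM 0), hM⟩

lemma taylor_bound {f : ℝ → ℂ} (hf : ContDiff ℝ (⊤ : ℕ∞) f) {M : ℝ}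
    (hM : ∀ x, ‖deriv (deriv f) x‖ ≤ M) (x h : ℝ) (hh : 0 < h) :
    ‖(h : ℂ)⁻¹ * (f (x + h) - f x) - deriv f x‖ ≤ h * M := by
  have hfd : Differentiable ℝ f := hf.differentiable (by simp)
  have hdd : Differentiable ℝ (deriv f) := (contDiff_infty_iff_deriv.1 hf).2.differentiable (by simp)
  have h1 : ∀ y z, ‖deriv f z - deriv f y‖ ≤ M * ‖z - y‖ := fun y z =>
    Convex.norm_image_sub_le_of_norm_deriv_le (s := Set.univ) (fun x _ => hdd x)
      (fun x _ => hM x) convex_univ trivial trivial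
  have hM0 : 0 ≤ M := (norm_nonneg _).trans (hM 0)
  let G : ℝ → ℂ := fun y => f y - (y : ℂ) * deriv f x
  have hG : ∀ y, HasDerivAt G (deriv f y - deriv f x) y := by
    intro y
    have := (hfd y).hasDerivAt.sub (((hasDerivAt_id (y : ℂ)).comp_ofReal).mul_const (deriv f x))
    rw [one_mul] at this
    exact this
  have h2 : ‖G (x + h) - G x‖ ≤ (M * h) * ‖(x + h) - x‖ := by
    apply Convex.norm_image_sub_le_of_norm_hasDerivWithin_le (s := Set.Icc x (x + h))
      (fun y _ => (hG y).hasDerivWithinAt) _ (convex_Icc _ _)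
      ⟨le_refl _, by linarith⟩ ⟨by linarith, le_refl _⟩
    intro y hy
    refine (h1 x y).trans ?_
    gcongr
    rw [Real.norm_of_nonneg (by linarith [hy.1])]
    linarith [hy.2]
  have h3 : (h : ℂ)⁻¹ * (f (x + h) - f x) - deriv f x = (h : ℂ)⁻¹ * (G (x + h) - G x) := by
    have : (h : ℂ) ≠ 0 := by exact_mod_cast hh.ne'
    simp only [G]
    field_simp
    push_cast
    ring
  rw [h3, norm_mul, norm_inv, Complex.norm_real, Real.norm_of_nonneg hh.le]
  rw [add_sub_cancel_left, Real.norm_of_nonneg hh.le] at h2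
  rw [inv_mul_le_iff₀ hh]
  linarith

lemma WHSpace.diffquot (W : WHSpace) (u u' : W.E) (f : ℝ → ℂ) (hf : IsTestPlus f)
    (hu : W.toFun u =ᵐ[volume] f) (hu' : W.toFun u' =ᵐ[volume] deriv f) :
    Tendsto (fun h : ℝ => (h : ℂ)⁻¹ • (W.S (-h) u - u)) (𝓝[>] 0) (𝓝 u') := by
  obtain ⟨α, β, hα, hαβ, hs⟩ := hf.exists_Icc
  have hz := zero_of_notMem hs
  have hz' := zero_of_notMem (tsupport_deriv_subset.trans hs)
  obtain ⟨C, hC, N, hN⟩ := W.test_cont (Set.Icc (α / 2) β) isCompact_Icc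
  have hM : ∀ k : ℕ, ∃ M, 0 ≤ M ∧ ∀ x, ‖iteratedDeriv k f x‖ ≤ M := by
    intro k
    apply bdd_of_compact (smooth_iteratedDeriv hf.1 k).continuous
    exact HasCompactSupport.of_support_subset_isCompact hf.2.1
      ((subset_tsupport _).trans (supp_iteratedDeriv k))
  choose M hM0 hM using hM
  rw [tendsto_iff_norm_sub_tendsto_zero]
  set D : ℝ := C * ∑ k ∈ Finset.range (N + 1), M (k + 2) with hD
  have hlim : Tendsto (fun h : ℝ => h * D) (𝓝[>] 0) (𝓝 0) := by
    have : Tendsto (fun h : ℝ => h * D) (𝓝 0) (𝓝 (0 * D)) :=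
      (continuous_id.mul continuous_const).tendsto 0
    rw [zero_mul] at this
    exact this.mono_left nhdsWithin_le_nhds
  refine squeeze_zero' (Eventually.of_forall fun _ => norm_nonneg _) ?_ hlim
  have hev : ∀ᶠ h : ℝ in 𝓝[>] 0, h < α / 2 :=
    nhdsWithin_le_nhds (Iio_mem_nhds (by linarith))
  filter_upwards [self_mem_nhdsWithin, hev] with h (hh : 0 < h) hhα
  set g : ℝ → ℂ := fun x => (h : ℂ)⁻¹ * (f (x + h) - f x) - deriv f x with hg
  have hfs : ContDiff ℝ (⊤ : ℕ∞) (fun x => f (x + h)) :=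
    hf.1.comp (contDiff_id.add contDiff_const)
  have hds : ContDiff ℝ (⊤ : ℕ∞) (deriv f) := (contDiff_infty_iff_deriv.1 hf.1).2
  have hgs : ContDiff ℝ (⊤ : ℕ∞) g := (contDiff_const.mul (hfs.sub hf.1)).sub hds
  have hgt := isTestPlus_of (α := α / 2) (β := β) hgs (by linarith) (by
    intro x hx
    have h1 : x ∉ Set.Icc α β := fun hx' => hx ⟨by linarith [hx'.1], hx'.2⟩
    have h2 : x + h ∉ Set.Icc α β := fun hx' => hx ⟨by linarith [hx'.1], by linarith [hx'.2]⟩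
    simp [hg, hz _ h1, hz _ h2, hz' _ h1])
  have hrep : W.toFun ((h : ℂ)⁻¹ • (W.S (-h) u - u) - u') =ᵐ[volume] g := by
    have h1 := W.S_neg_test u f hu h (fun x hx => hz x (fun hx' => by linarith [hx'.1]))
    filter_upwards [h1, hu, hu'] with x e1 e2 e3
    simp [hg, e1, e2, e3]
  refine (hN _ g hgt.1 hgt.2 hrep).trans ?_
  rw [hD, Finset.mul_sum, Finset.mul_sum, Finset.mul_sum]
  apply Finset.sum_le_sum
  intro k _
  have hk : ∀ x, ‖iteratedDeriv k g x‖ ≤ h * M (k + 2) := by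
    intro x
    have e : iteratedDeriv k g x = (h : ℂ)⁻¹ * (iteratedDeriv k f (x + h) - iteratedDeriv k f x)
        - deriv (iteratedDeriv k f) x := by
      have a1 : ContDiffAt ℝ k (fun x => f (x + h)) x := (hfs.of_le (by exact_mod_cast le_top)).contDiffAt
      have a2 : ContDiffAt ℝ k f x := (hf.1.of_le (by exact_mod_cast le_top)).contDiffAt
      have a3 : ContDiffAt ℝ k (deriv f) x := (hds.of_le (by exact_mod_cast le_top)).contDiffAt
      have a4 : ContDiffAt ℝ k ((fun x => f (x + h)) - f) x := a1.sub a2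
      have a5 : ContDiffAt ℝ k (fun x => (h : ℂ)⁻¹ * ((fun x => f (x + h)) - f) x) x :=
        contDiffAt_const.mul a4
      have : g = (fun x => (h : ℂ)⁻¹ * ((fun x => f (x + h)) - f) x) - deriv f := by
        funext x; simp [hg]
      rw [this, iteratedDeriv_sub a5 a3,
        iteratedDeriv_const_mul _ a4, iteratedDeriv_sub a1 a2,
        iteratedDeriv_comp_add_const, ← iteratedDeriv_succ, ← iteratedDeriv_succ']
    rw [e]
    apply taylor_bound (smooth_iteratedDeriv hf.1 k) _ _ _ hh
    intro y
    have := hM (k + 2) y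
    rwa [iteratedDeriv_succ, iteratedDeriv_succ] at this
  calc C * ⨆ x, ‖iteratedDeriv k g x‖ ≤ C * (h * M (k + 2)) := by
        gcongr
        exact ciSup_le hk
    _ = _ := by ring

/-- The identity `(Tf)' = T f'`, in integrated form. -/
lemma WHSpace.diff_rel (W : WHSpace) {T : W.E →L[ℂ] W.E} (hT : IsWienerHopf W T)
    (u u' : W.E) (f : ℝ → ℂ) (hf : IsTestPlus f)
    (hu : W.toFun u =ᵐ[volume] f) (hu' : W.toFun u' =ᵐ[volume] deriv f)
    (x y : ℝ) (hx : 0 ≤ x) (hy : 0 ≤ y) :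
    Tendsto (fun h : ℝ => (h : ℂ)⁻¹ * (∫ t in y..(y + h), W.toFun (T u) t)
      - (h : ℂ)⁻¹ * ∫ t in x..(x + h), W.toFun (T u) t) (𝓝[>] 0)
      (𝓝 (∫ t in x..y, W.toFun (T u') t)) := by
  obtain ⟨α, β, hα, hαβ, hs⟩ := hf.exists_Icc
  have hz := zero_of_notMem hs
  obtain ⟨ℓ, hℓ⟩ := W.exists_ell x y
  have h1 := W.diffquot u u' f hf hu hu'
  have h2 := ((ℓ.comp T).continuous.tendsto u').comp h1
  have hev : ∀ᶠ h : ℝ in 𝓝[>] 0, h < α := nhdsWithin_le_nhds (Iio_mem_nhds hα)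
  rw [ContinuousLinearMap.comp_apply, hℓ] at h2
  refine h2.congr' ?_
  filter_upwards [self_mem_nhdsWithin, hev] with h (hh : 0 < h) hhα
  have hc := W.comm_neg hT u f hu h hh.le (fun x hx => hz x (fun hx' => by linarith [hx'.1]))
  simp only [Function.comp_apply, map_smul, map_sub, ContinuousLinearMap.comp_apply, ← hc, smul_eq_mul]
  rw [hℓ, hℓ, W.int_S_neg _ _ _ _ hx hy, ← mul_sub]
  congr 1
  have i := fun a b => W.ii (T u) a b
  rw [← intervalIntegral.integral_interval_sub_left (i x (y + h)) (i x y),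
    ← intervalIntegral.integral_interval_sub_left (i x (y + h)) (i x (x + h))]
  ring

lemma ae_exists_nonneg {p : ℝ → Prop} (h : ∀ᵐ x, p x) : ∃ x, 0 ≤ x ∧ p x := by
  have : (ae (volume.restrict (Set.Ici (0 : ℝ)))).NeBot := by
    rw [ae_neBot]
    intro h0
    have := congrArg (fun m => m Set.univ) h0
    simp at this
  obtain ⟨x, hx⟩ := ((ae_restrict_of_ae (s := Set.Ici (0 : ℝ)) h).and
    (ae_restrict_mem measurableSet_Ici)).exists
  exact ⟨x, hx.2, hx.1⟩

lemma WHSpace.exists_rd (W : WHSpace) {T : W.E →L[ℂ] W.E} (hT : IsWienerHopf W T)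
    (u : W.E) (f : ℝ → ℂ) (hf : IsTestPlus f) (hu : W.toFun u =ᵐ[volume] f)
    (x : ℝ) (hx : 0 ≤ x) : ∃ c, Rd (W.toFun (T u)) x c := by
  obtain ⟨u', hu'⟩ := W.test_mem _ hf.deriv
  obtain ⟨y, hy, hyr⟩ := ae_exists_nonneg (rd_ae (W.locInt (T u)))
  have h1 := W.diff_rel hT u u' f hf hu hu' y x hy hx
  have h2 := h1.add hyr
  refine ⟨_, h2.congr fun h => ?_⟩
  ring

lemma WHSpace.bound1 (W : WHSpace) (X : ℝ) : ∃ C > 0, ∀ (T : W.E →L[ℂ] W.E),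
    IsWienerHopf W T → ∀ (u u' : W.E) (f : ℝ → ℂ), IsTestPlus f →
    W.toFun u =ᵐ[volume] f → W.toFun u' =ᵐ[volume] deriv f →
    ∀ᵐ t, 0 ≤ t → t ≤ X → ‖W.toFun (T u) t‖ ≤ C * ‖T‖ * (‖u‖ + ‖u'‖) := by
  obtain ⟨C, hC, h⟩ := W.incl_cont (Set.Icc 0 (X + 1)) isCompact_Icc
  refine ⟨C, hC, ?_⟩
  intro T hT u u' f hf hu hu'
  have hr := rd_ae (W.locInt (T u))
  have hint : ∀ v : W.E, IntegrableOn (fun x => ‖W.toFun v x‖) (Set.Icc 0 (X + 1)) volume :=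
    fun v => ((W.locInt v).integrableOn_isCompact isCompact_Icc).norm
  filter_upwards [hr] with t ht h0 hX
  set J := ∫ s in Set.Icc 0 (X + 1), ‖W.toFun (T u') s‖ with hJ
  have hsub : Set.Icc t (t + 1) ⊆ Set.Icc 0 (X + 1) := Set.Icc_subset_Icc h0 (by linarith)
  have hpt : ∀ᵐ s, s ∈ Set.Icc t (t + 1) → ‖W.toFun (T u) t‖ ≤ ‖W.toFun (T u) s‖ + J := by
    filter_upwards [hr] with s hs hmem
    have h1 := W.diff_rel hT u u' f hf hu hu' t s h0 (h0.trans hmem.1)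
    have h2 := tendsto_nhds_unique h1 (hs.sub ht)
    have h3 : ‖∫ r in t..s, W.toFun (T u') r‖ ≤ J := by
      rw [intervalIntegral.integral_of_le hmem.1]
      refine (norm_integral_le_integral_norm _).trans ?_
      refine setIntegral_mono_set (hint _) (Eventually.of_forall fun _ => norm_nonneg _) ?_
      apply LE.le.eventuallyLE
      intro r hr
      exact hsub ⟨hr.1.le, hr.2.trans hmem.2⟩
    have h4 : W.toFun (T u) t = W.toFun (T u) s - ∫ r in t..s, W.toFun (T u') r := by
      rw [h2]; ring
    rw [h4]
    exact (norm_sub_le _ _).trans (by linarith)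
  have hi : ‖W.toFun (T u) t‖ ≤ (∫ s in Set.Icc t (t + 1), ‖W.toFun (T u) s‖) + J := by
    have h5 : ∫ s in Set.Icc t (t + 1), ‖W.toFun (T u) t‖
        ≤ ∫ s in Set.Icc t (t + 1), (‖W.toFun (T u) s‖ + J) := by
      apply setIntegral_mono_on_ae
      · exact integrableOn_const (by simp)
      · exact ((hint _).mono_set hsub).add (integrableOn_const (by simp))
      · exact measurableSet_Icc
      · exact hpt
    rw [integral_add ((hint _).mono_set hsub) (integrableOn_const (by simp))] at h5
    simpa using h5
  have hk : ∫ s in Set.Icc t (t + 1), ‖W.toFun (T u) s‖ ≤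
      ∫ s in Set.Icc 0 (X + 1), ‖W.toFun (T u) s‖ :=
    setIntegral_mono_set (hint _) (Eventually.of_forall fun _ => norm_nonneg _) hsub.eventuallyLE
  have a1 := h (T u)
  have a2 := h (T u')
  have b1 : C * ‖T u‖ ≤ C * (‖T‖ * ‖u‖) := by gcongr; exact T.le_opNorm u
  have b2 : C * ‖T u'‖ ≤ C * (‖T‖ * ‖u'‖) := by gcongr; exact T.le_opNorm u'
  calc _ ≤ C * (‖T‖ * ‖u‖) + C * (‖T‖ * ‖u'‖) := by linarith
    _ = _ := by ring

lemma WHSpace.mod_S (W : WHSpace) (ξ a : ℝ) (u : W.E) :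
    W.Mod ξ (W.S a u) = Complex.exp (Complex.I * ξ * a) • W.S a (W.Mod ξ u) := by
  apply W.inj
  have h1 := ae_add_right (W.Mod_spec ξ u) (-a)
  filter_upwards [W.Mod_spec ξ (W.S a u), W.S_spec a u, W.S_spec a (W.Mod ξ u), h1]
    with x e1 e2 e3 e4
  rw [← sub_eq_add_neg] at e4
  simp only [map_smul, Pi.smul_apply, smul_eq_mul]
  rw [e1, modFun, e2, e3, transFun, transFun]
  split_ifs
  · rw [e4, modFun, ← mul_assoc, ← Complex.exp_add]
    congr 2
    push_cast
    ring
  · simp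

lemma WHSpace.wh_mod (W : WHSpace) {T : W.E →L[ℂ] W.E} (hT : IsWienerHopf W T) (ξ : ℝ) :
    IsWienerHopf W ((W.Mod (-ξ)).comp (T.comp (W.Mod ξ))) := by
  intro a ha
  ext u
  simp only [ContinuousLinearMap.comp_apply]
  have h1 := W.mod_S ξ a u
  have h2 := W.mod_S (-ξ) (-a) (T (W.Mod ξ (W.S a u)))
  have h3 := congrArg (fun A => A (W.Mod ξ u)) (hT a ha)
  simp only [ContinuousLinearMap.comp_apply] at h3
  have h4 : W.S (-a) (T (W.Mod ξ (W.S a u))) = Complex.exp (Complex.I * ξ * a) • T (W.Mod ξ u) := by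
    rw [h1, map_smul, map_smul, h3]
  rw [h4, map_smul] at h2
  have e : Complex.exp (Complex.I * ((-ξ : ℝ) : ℂ) * ((-a : ℝ) : ℂ))
      = Complex.exp (Complex.I * ξ * a) := by
    congr 1; push_cast; ring
  rw [e] at h2
  exact (smul_right_injective _ (Complex.exp_ne_zero _) h2).symm

lemma norm_exp_I_mul (ξ x : ℝ) : ‖Complex.exp (Complex.I * ξ * x)‖ = 1 := by
  rw [mul_assoc, ← Complex.ofReal_mul, mul_comm, Complex.norm_exp_ofReal_mul_I]

/-- Uniform bound for `T (e_ξ f)`. -/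
lemma WHSpace.bound_mod (W : WHSpace) {T : W.E →L[ℂ] W.E} (hT : IsWienerHopf W T) (X : ℝ)
    (u : W.E) (f : ℝ → ℂ) (hf : IsTestPlus f) (hu : W.toFun u =ᵐ[volume] f) :
    ∃ B > 0, ∀ ξ : ℝ, ∀ᵐ t, 0 ≤ t → t ≤ X → ‖W.toFun (T (W.Mod ξ u)) t‖ ≤ B := by
  obtain ⟨u', hu'⟩ := W.test_mem _ hf.deriv
  obtain ⟨C, hC, h⟩ := W.bound1 X
  obtain ⟨M, hM⟩ := W.Mod_bdd
  have hM0 : 0 ≤ M := (norm_nonneg _).trans (hM 0)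
  refine ⟨C * (M * (‖T‖ * M)) * (‖u‖ + ‖u'‖) + 1, by positivity, ?_⟩
  intro ξ
  filter_upwards [h _ (W.wh_mod hT ξ) u u' f hf hu hu', W.Mod_spec (-ξ) (T (W.Mod ξ u))]
    with t h1 h2 h0 hX
  have h3 := h1 h0 hX
  simp only [ContinuousLinearMap.comp_apply] at h3
  rw [h2, modFun, norm_mul, norm_exp_I_mul, one_mul] at h3
  have h4 : ‖(W.Mod (-ξ)).comp (T.comp (W.Mod ξ))‖ ≤ M * (‖T‖ * M) := by
    refine (ContinuousLinearMap.opNorm_comp_le _ _).trans ?_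
    gcongr
    · exact hM _
    · refine (ContinuousLinearMap.opNorm_comp_le _ _).trans ?_
      gcongr
      exact hM _
  have h5 : C * ‖(W.Mod (-ξ)).comp (T.comp (W.Mod ξ))‖ * (‖u‖ + ‖u'‖)
      ≤ C * (M * (‖T‖ * M)) * (‖u‖ + ‖u'‖) := by gcongr
  linarith

lemma fourier_expand {a b : ℝ} (hab : a < b) : ∃ C > 0, ∀ (f : ℝ → ℂ) (M : ℝ), 0 < M →
    ContDiff ℝ (⊤ : ℕ∞) f → f a = 0 → f b = 0 → (∀ x, ‖f x‖ ≤ M) → (∀ x, ‖deriv f x‖ ≤ M) →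
    ∃ c : ℤ → ℂ, Summable (fun n => ‖c n‖) ∧ ∑' n, ‖c n‖ ≤ C * M ∧
      ∀ x ∈ Set.Icc a b, HasSum
        (fun n : ℤ => c n * Complex.exp (Complex.I * ((2 * Real.pi * n / (b - a) : ℝ) : ℂ) * (x : ℂ)))
        (f x) := by
  have hL : 0 < b - a := by linarith
  have : Fact (0 < b - a) := ⟨hL⟩
  have hS : Summable (fun n : ℤ => 1 / (n : ℝ) ^ 2) := Real.summable_one_div_int_pow.2 (by norm_num)
  set S := ∑' n : ℤ, 1 / (n : ℝ) ^ 2 with hSdef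
  have hS0 : 0 ≤ S := tsum_nonneg (fun n => by positivity)
  set K : ℝ := (b - a) / (4 * Real.pi) with hK
  have hK0 : 0 < K := by positivity
  refine ⟨1 + K * (1 + S), by positivity, ?_⟩
  intro f M hM hf hfa hfb hfM hdM
  have hfc : Continuous f := hf.continuous
  have hfd : Differentiable ℝ f := hf.differentiable (by simp)
  have hdc : Continuous (deriv f) := hf.continuous_deriv (by simp)
  set d : ℤ → ℂ := fourierCoeffOn hab (deriv f) with hd
  set c : ℤ → ℂ := fourierCoeffOn hab f with hc
  have hL2 : MemLp (deriv f) 2 (volume.restrict (Set.Ioc a b)) := by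
    refine MemLp.of_bound hdc.aestronglyMeasurable M (Eventually.of_forall hdM)
  have hds := hasSum_sq_fourierCoeffOn hab hL2
  have hdle : (b - a)⁻¹ • ∫ x in a..b, ‖deriv f x‖ ^ 2 ≤ M ^ 2 := by
    have h1 : ∫ x in a..b, ‖deriv f x‖ ^ 2 ≤ ∫ x in a..b, M ^ 2 := by
      apply intervalIntegral.integral_mono_on hab.le
      · exact (hdc.norm.pow 2).intervalIntegrable _ _
      · simp
      · intro x _
        exact pow_le_pow_left₀ (norm_nonneg _) (hdM x) 2
    simp only [intervalIntegral.integral_const, smul_eq_mul] at h1 ⊢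
    rw [inv_mul_le_iff₀ hL]
    exact h1
  have hc0 : ‖c 0‖ ≤ M := by
    rw [hc, fourierCoeffOn_eq_integral]
    have h1 : ‖∫ x in a..b, fourier (-0) (x : AddCircle (b - a)) • f x‖ ≤ M * |b - a| := by
      apply intervalIntegral.norm_integral_le_of_norm_le_const
      intro x _
      simpa using hfM x
    rw [norm_smul, abs_of_pos hL] at *
    rw [Real.norm_of_nonneg (by positivity), div_mul_eq_mul_div, one_mul, div_le_iff₀ hL]
    exact h1
  have hcn : ∀ n : ℤ, n ≠ 0 → ‖c n‖ ≤ K * (‖d n‖ ^ 2 / M + M * (1 / (n : ℝ) ^ 2)) := by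
    intro n hn
    have h1 := fourierCoeffOn_of_hasDerivAt hab hn (f := f) (f' := deriv f)
      (fun x _ => (hfd x).hasDerivAt) (hdc.intervalIntegrable _ _)
    have hnr : (n : ℝ) ≠ 0 := by exact_mod_cast hn
    have habs : 0 < |(n : ℝ)| := abs_pos.2 hnr
    have h2 : ‖c n‖ = (b - a) / (2 * Real.pi) * (‖d n‖ / |(n : ℝ)|) := by
      rw [hc, h1, hfa, hfb, ← hd]
      have : ‖((b : ℂ) - a)‖ = b - a := by
        rw [← Complex.ofReal_sub, Complex.norm_real, Real.norm_of_nonneg hL.le]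
      simp only [sub_self, mul_zero, zero_sub, norm_mul, norm_neg, this, norm_div, norm_one,
        Complex.norm_I, Complex.norm_real, Complex.norm_ofNat, Complex.norm_intCast]
      rw [Real.norm_of_nonneg Real.pi_pos.le]
      field_simp
    rw [h2]
    have h3 : ‖d n‖ / |(n : ℝ)| ≤ (1 / 2) * (‖d n‖ ^ 2 / M + M * (1 / (n : ℝ) ^ 2)) := by
      rw [← sq_abs (n : ℝ)]
      have := sq_nonneg (‖d n‖ * |(n : ℝ)| - M)
      rw [div_le_iff₀ habs]
      have e : 1 / 2 * (‖d n‖ ^ 2 / M + M * (1 / |(n : ℝ)| ^ 2)) * |(n : ℝ)| - ‖d n‖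
        = (‖d n‖ * |(n : ℝ)| - M) ^ 2 / (2 * M * |(n : ℝ)|) := by
        field_simp
        ring
      have : 0 ≤ (‖d n‖ * |(n : ℝ)| - M) ^ 2 / (2 * M * |(n : ℝ)|) := by positivity
      linarith
    calc _ ≤ (b - a) / (2 * Real.pi) * ((1 / 2) * (‖d n‖ ^ 2 / M + M * (1 / (n : ℝ) ^ 2))) := by
          gcongr
      _ = _ := by rw [hK]; ring
  have hsum1 : HasSum (fun n : ℤ => (if n = 0 then M else 0) +
      K * (‖d n‖ ^ 2 / M + M * (1 / (n : ℝ) ^ 2)))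
      (M + K * (((b - a)⁻¹ • ∫ x in a..b, ‖deriv f x‖ ^ 2) / M + M * S)) := by
    apply HasSum.add
    · exact hasSum_ite_eq 0 M
    · exact ((hds.div_const M).add (hS.hasSum.mul_left M)).mul_left K
  have hle : ∀ n : ℤ, ‖c n‖ ≤ (if n = 0 then M else 0) +
      K * (‖d n‖ ^ 2 / M + M * (1 / (n : ℝ) ^ 2)) := by
    intro n
    by_cases hn : n = 0
    · subst hn
      simp only [if_true]
      have : 0 ≤ K * (‖d 0‖ ^ 2 / M + M * (1 / ((0 : ℤ) : ℝ) ^ 2)) := by positivity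
      linarith
    · simp only [hn, if_false, zero_add]
      exact hcn n hn
  have hcs : Summable (fun n => ‖c n‖) :=
    Summable.of_nonneg_of_le (fun n => norm_nonneg _) hle hsum1.summable
  refine ⟨c, hcs, ?_, ?_⟩
  · have h1 : ∑' n, ‖c n‖ ≤ _ := (hcs.tsum_le_tsum hle hsum1.summable)
    rw [hsum1.tsum_eq] at h1
    refine h1.trans ?_
    have : ((b - a)⁻¹ • ∫ x in a..b, ‖deriv f x‖ ^ 2) / M ≤ M := by
      rw [div_le_iff₀ hM]
      nlinarith
    calc _ ≤ M + K * (M + M * S) := by gcongr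
      _ = _ := by ring
  · intro x hx
    have hab' : a + (b - a) = b := by ring
    let F : C(AddCircle (b - a), ℂ) := ⟨AddCircle.liftIco (b - a) a f, by
      apply AddCircle.liftIco_continuous
      · rw [hab', hfa, hfb]
      · exact hfc.continuousOn⟩
    have hcoeff : fourierCoeff F = c := by
      funext n
      have := fourierCoeff_liftIco_eq (T := b - a) (a := a) f n
      change fourierCoeff (AddCircle.liftIco (b - a) a f) n = _
      rw [this, hc]
      simp only [hab']
    have hsF : Summable (fourierCoeff F) := by rw [hcoeff]; exact hcs.of_norm
    have h1 := has_pointwise_sum_fourier_series_of_summable hsF (x : AddCircle (b - a))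
    have h2 : F (x : AddCircle (b - a)) = f x := by
      change AddCircle.liftIco (b - a) a f (x : AddCircle (b - a)) = f x
      rcases eq_or_lt_of_le hx.2 with h | h
      · have : (x : AddCircle (b - a)) = (a : AddCircle (b - a)) := by
          rw [h]
          simpa using AddCircle.coe_add_period (b - a) a
        rw [this, AddCircle.liftIco_coe_apply ⟨le_refl _, by linarith⟩, h, hfa, hfb]
      · rw [AddCircle.liftIco_coe_apply ⟨hx.1, by linarith⟩]
    rw [h2, hcoeff] at h1
    convert h1 using 2 with n
    rw [smul_eq_mul, fourier_coe_apply]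
    congr 2
    push_cast
    ring

lemma exists_cutoff {a b : ℝ} (ha : 0 < a) (hab : a < b) : ∃ χ : ℝ → ℂ,
    ContDiff ℝ (⊤ : ℕ∞) χ ∧ (∀ x ∈ Set.Icc a b, χ x = 1) ∧
    (∀ x, x ∉ Set.Icc (a / 2) (b + a / 2) → χ x = 0) ∧ ∀ x, ‖χ x‖ ≤ 1 := by
  let φ : ContDiffBump ((a + b) / 2) := ⟨(b - a) / 2, (b - a) / 2 + a / 2, by linarith, by linarith⟩
  refine ⟨fun x => ((φ x : ℝ) : ℂ), ?_, ?_, ?_, ?_⟩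
  · exact Complex.ofRealCLM.contDiff.comp φ.contDiff
  · intro x hx
    have : φ x = 1 := by
      apply φ.one_of_mem_closedBall
      rw [Metric.mem_closedBall, Real.dist_eq, abs_le]
      change -((b - a) / 2) ≤ _ ∧ _ ≤ (b - a) / 2
      constructor <;> linarith [hx.1, hx.2]
    simp [this]
  · intro x hx
    have : φ x = 0 := by
      apply φ.zero_of_le_dist
      change (b - a) / 2 + a / 2 ≤ _
      rw [Real.dist_eq]
      by_contra h
      rw [not_le, abs_lt] at h
      exact hx ⟨by linarith [h.1], by linarith [h.2]⟩
    simp [this]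
  · intro x
    simp only [Complex.norm_real, Real.norm_of_nonneg φ.nonneg]
    exact φ.le_one

lemma WHSpace.bound2 (W : WHSpace) {T : W.E →L[ℂ] W.E} (hT : IsWienerHopf W T)
    {a b : ℝ} (ha : 0 < a) (hab : a < b) (X : ℝ) :
    ∃ C > 0, ∀ (u : W.E) (f : ℝ → ℂ) (M : ℝ), 0 < M → ContDiff ℝ (⊤ : ℕ∞) f →
      (∀ x, x ∉ Set.Icc a b → f x = 0) → (∀ x, ‖f x‖ ≤ M) → (∀ x, ‖deriv f x‖ ≤ M) →
      W.toFun u =ᵐ[volume] f → ∀ x c, 0 ≤ x → x ≤ X → Rd (W.toFun (T u)) x c → ‖c‖ ≤ C * M := by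
  obtain ⟨χ, hχs, hχ1, hχ0, hχb⟩ := exists_cutoff ha hab
  have hχt := (isTestPlus_of hχs (by linarith) hχ0).1
  obtain ⟨U, hU⟩ := W.test_mem χ hχt
  obtain ⟨B, hB, hBb⟩ := W.bound_mod hT (X + 1) U χ hχt hU
  obtain ⟨C, hC, hF⟩ := fourier_expand (show a / 2 < b + a / 2 by linarith)
  obtain ⟨Mm, hMm⟩ := W.Mod_bdd
  refine ⟨B * C, by positivity, ?_⟩
  intro u f M hM hf hf0 hfM hdM hu x c hx hxX hc
  obtain ⟨cf, hcs, hcle, hsum⟩ := hF f M hM hf (hf0 _ (fun h => by linarith [h.1]))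
    (hf0 _ (fun h => by linarith [h.2])) hfM hdM
  set ξ : ℤ → ℝ := fun n => 2 * Real.pi * n / (b + a / 2 - a / 2) with hξ
  set v : ℤ → W.E := fun n => cf n • W.Mod (ξ n) U with hv
  have hvs : Summable v := by
    apply Summable.of_norm
    refine Summable.of_nonneg_of_le (fun n => norm_nonneg _) (fun n => ?_)
      (hcs.mul_right (Mm * ‖U‖))
    rw [hv, norm_smul]
    gcongr
    exact ((W.Mod (ξ n)).le_opNorm U).trans (by gcongr; exact hMm _)
  obtain ⟨V, hV⟩ := hvs
  -- pointwise sum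
  have hpt : ∀ y : ℝ, HasSum (fun n => cf n * (Complex.exp (Complex.I * (ξ n : ℂ) * (y : ℂ)) * χ y))
      (f y) := by
    intro y
    by_cases hy : y ∈ Set.Icc (a / 2) (b + a / 2)
    · have h1 := (hsum y hy).mul_right (χ y)
      have h2 : f y * χ y = f y := by
        by_cases hy' : y ∈ Set.Icc a b
        · rw [hχ1 y hy', mul_one]
        · rw [hf0 y hy', zero_mul]
      rw [h2] at h1
      have h3 : (fun n => cf n * (Complex.exp (Complex.I * (ξ n : ℂ) * (y : ℂ)) * χ y)) =
          fun n => cf n * Complex.exp (Complex.I * (ξ n : ℂ) * (y : ℂ)) * χ y := by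
        funext n
        exact (mul_assoc (cf n) _ (χ y)).symm
      rw [h3]
      exact h1
    · rw [hχ0 y hy, hf0 y (fun h => hy ⟨by linarith [h.1], by linarith [h.2]⟩)]
      simp [hasSum_zero]
  have hVf : ∀ y z : ℝ, ∫ t in y..z, W.toFun V t = ∫ t in y..z, f t := by
    intro y z
    obtain ⟨ℓ, hℓ⟩ := W.exists_ell y z
    have h1 := ℓ.hasSum hV
    rw [hℓ] at h1
    refine h1.unique ?_
    have h2 : ∀ n, ℓ (v n) = ∫ t in y..z,
        cf n * (Complex.exp (Complex.I * (ξ n : ℂ) * (t : ℂ)) * χ t) := by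
      intro n
      rw [hℓ]
      apply intervalIntegral.integral_congr_ae
      filter_upwards [W.Mod_spec (ξ n) U, hU] with t e1 e2 _
      simp only [hv, map_smul, Pi.smul_apply, smul_eq_mul, e1, modFun, e2]
    simp only [h2]
    apply intervalIntegral.hasSum_integral_of_dominated_convergence (fun n _ => ‖cf n‖)
    · intro n
      apply Continuous.aestronglyMeasurable
      have := hχs.continuous
      fun_prop
    · intro n
      refine Eventually.of_forall fun t _ => ?_
      rw [norm_mul, norm_mul, norm_exp_I_mul, one_mul]
      exact mul_le_of_le_one_right (norm_nonneg _) (hχb t)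
    · exact Eventually.of_forall fun t _ => hcs
    · simp
    · exact Eventually.of_forall fun t _ => hpt t
  have hVu : V = u := by
    apply W.inj
    refine EventuallyEq.trans ?_ hu.symm
    filter_upwards [rd_ae (W.locInt V), rd_ae hf.continuous.locallyIntegrable] with y h1 h2
    refine h1.unique ?_
    unfold Rd at h2 ⊢
    simpa only [hVf] using h2
  subst hVu
  refine le_of_tendsto hc.norm ?_
  have hev : ∀ᶠ h : ℝ in 𝓝[>] 0, h < 1 := nhdsWithin_le_nhds (Iio_mem_nhds (by norm_num))
  filter_upwards [self_mem_nhdsWithin, hev] with h (hh : 0 < h) hh1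
  obtain ⟨ℓ, hℓ⟩ := W.exists_ell x (x + h)
  have h1 := (ℓ.comp T).hasSum hV
  have h2 : ∀ n, ‖(ℓ.comp T) (v n)‖ ≤ ‖cf n‖ * (B * h) := by
    intro n
    simp only [hv, ContinuousLinearMap.comp_apply, map_smul, smul_eq_mul, norm_mul]
    gcongr
    rw [hℓ]
    have := intervalIntegral.norm_integral_le_of_norm_le_const_ae (a := x) (b := x + h) (C := B)
      (f := W.toFun (T (W.Mod (ξ n) U))) (by
        filter_upwards [hBb (ξ n)] with t ht hmem
        rw [Set.uIoc_of_le (by linarith)] at hmem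
        exact ht (by linarith [hmem.1]) (by linarith [hmem.2]))
    rwa [add_sub_cancel_left, abs_of_pos hh] at this
  have h3 : ‖(ℓ.comp T) V‖ ≤ (∑' n, ‖cf n‖) * (B * h) := by
    rw [← h1.tsum_eq]
    exact tsum_of_norm_bounded (hcs.hasSum.mul_right _) h2
  rw [ContinuousLinearMap.comp_apply, hℓ] at h3
  rw [norm_mul, norm_inv, Complex.norm_real, Real.norm_of_nonneg hh.le, inv_mul_le_iff₀ hh]
  calc _ ≤ (∑' n, ‖cf n‖) * (B * h) := h3
    _ ≤ (C * M) * (B * h) := by gcongr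
    _ = _ := by ring

lemma test_shift {g : ℝ → ℂ} (hg : IsTest g) {R : ℝ} (hR : ∀ x, x ∉ Set.Icc (-R) R → g x = 0)
    {a : ℝ} (ha : R < a) : IsTestPlus (fun y => g (a - y)) := by
  refine (isTestPlus_of (α := a - R) (β := a + R) ?_ (by linarith) ?_).1
  · exact hg.1.comp (contDiff_const.sub contDiff_id)
  · intro x hx
    exact hR _ (fun h => hx ⟨by linarith [h.2], by linarith [h.1]⟩)

lemma compact_bound {K : Set ℝ} (hK : IsCompact K) : ∃ R > 0, K ⊆ Set.Icc (-R) R := by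
  obtain ⟨R, hR⟩ := hK.isBounded.subset_closedBall 0
  refine ⟨max R 1, by positivity, fun x hx => ?_⟩
  have := hR hx
  rw [Metric.mem_closedBall, Real.dist_eq, sub_zero, abs_le] at this
  exact ⟨by linarith [le_max_left R 1], this.2.trans (le_max_left R 1)⟩

/-- `c` is the value of `μ_T` at `g`. -/
def WHSpace.Val (W : WHSpace) (T : W.E →L[ℂ] W.E) (g : ℝ → ℂ) (c : ℂ) : Prop :=
  ∀ a : ℝ, 0 ≤ a → IsTestPlus (fun y => g (a - y)) →
    ∀ u : W.E, W.toFun u =ᵐ[volume] (fun y => g (a - y)) → Rd (W.toFun (T u)) a c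

lemma WHSpace.shift_rd (W : WHSpace) {T : W.E →L[ℂ] W.E} (hT : IsWienerHopf W T) (g : ℝ → ℂ)
    {a b : ℝ} (ha : 0 ≤ a) (hab : a ≤ b) (hga : IsTestPlus (fun y => g (a - y)))
    (u v : W.E) (hu : W.toFun u =ᵐ[volume] (fun y => g (a - y)))
    (hv : W.toFun v =ᵐ[volume] (fun y => g (b - y))) (c : ℂ) :
    Rd (W.toFun (T u)) a c ↔ Rd (W.toFun (T v)) b c := by
  have hz : ∀ x, x < b - a → g (b - x) = 0 := by
    intro x hx
    have := zero_of_notMem hga.2.2 (x - (b - a)) (fun h => by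
      have : 0 < x - (b - a) := h
      linarith)
    have e : a - (x - (b - a)) = b - x := by ring
    simpa only [e] using this
  have h1 := W.S_neg_test v _ hv (b - a) hz
  have h2 := W.comm_neg hT v _ hv (b - a) (by linarith) hz
  have h3 : W.S (-(b - a)) v = u := by
    apply W.inj
    refine h1.trans (EventuallyEq.trans (Eventually.of_forall fun x => ?_) hu.symm)
    change g _ = g _
    congr 1
    ring
  rw [h3] at h2
  unfold Rd
  apply tendsto_congr'
  filter_upwards [self_mem_nhdsWithin] with h (hh : 0 < h)
  rw [← h2, W.int_S_neg _ _ _ _ ha (by linarith)]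
  congr 2 <;> ring

lemma IsTest.exists_R {g : ℝ → ℂ} (hg : IsTest g) :
    ∃ R > 0, ∀ x, x ∉ Set.Icc (-R) R → g x = 0 := by
  obtain ⟨R, h0, hR⟩ := compact_bound hg.2
  exact ⟨R, h0, zero_of_notMem hR⟩

lemma WHSpace.exists_val (W : WHSpace) {T : W.E →L[ℂ] W.E} (hT : IsWienerHopf W T) (g : ℝ → ℂ)
    (hg : IsTest g) : ∃ c, W.Val T g c := by
  obtain ⟨R, h0, hR⟩ := hg.exists_R
  have ht := test_shift hg hR (show R < R + 1 by linarith)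
  obtain ⟨u, hu⟩ := W.test_mem _ ht
  obtain ⟨c, hc⟩ := W.exists_rd hT u _ ht hu (R + 1) (by linarith)
  refine ⟨c, ?_⟩
  intro a ha hta v hv
  rcases le_total a (R + 1) with h | h
  · exact (W.shift_rd hT g ha h hta v u hv hu c).2 hc
  · exact (W.shift_rd hT g (by linarith) h ht u v hu hv c).1 hc

lemma Rd.add {w₁ w₂ : ℝ → ℂ} {x : ℝ} {c d : ℂ} (h1 : Rd w₁ x c) (h2 : Rd w₂ x d)
    (i1 : ∀ a b, IntervalIntegrable w₁ volume a b) (i2 : ∀ a b, IntervalIntegrable w₂ volume a b) :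
    Rd (w₁ + w₂) x (c + d) := by
  refine (Tendsto.add h1 h2).congr fun h => ?_
  rw [← mul_add, ← intervalIntegral.integral_add (i1 _ _) (i2 _ _)]
  rfl

lemma Rd.smul {w : ℝ → ℂ} {x : ℝ} {c : ℂ} (k : ℂ) (h1 : Rd w x c) : Rd (k • w) x (k * c) := by
  refine (Tendsto.const_mul k h1).congr fun h => ?_
  simp only [Pi.smul_apply, smul_eq_mul, intervalIntegral.integral_const_mul]
  ring

/-- Test functions as a subspace. -/
def testSub : Submodule ℂ (ℝ → ℂ) where
  carrier := {g | IsTest g}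
  add_mem' := fun {f g} hf hg => ⟨hf.1.add hg.1, hf.2.add hg.2⟩
  zero_mem' := ⟨contDiff_const, HasCompactSupport.zero⟩
  smul_mem' := fun c f hf => ⟨contDiff_const.smul hf.1, hf.2.smul_left (f := fun _ => c)⟩

lemma WHSpace.exists_mu (W : WHSpace) {T : W.E →L[ℂ] W.E} (hT : IsWienerHopf W T) :
    ∃ μ : (ℝ → ℂ) →ₗ[ℂ] ℂ, ∀ g, IsTest g → W.Val T g (μ g) := by
  choose m hm using fun g : testSub => W.exists_val hT g.1 g.2
  let m' : testSub →ₗ[ℂ] ℂ :=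
    { toFun := m
      map_add' := by
        intro f g
        obtain ⟨R, h0, hR⟩ := IsTest.exists_R f.2
        obtain ⟨S, k0, hS⟩ := IsTest.exists_R g.2
        have t1 := test_shift f.2 hR (show R < R + S by linarith)
        have t2 := test_shift g.2 hS (show S < R + S by linarith)
        have t3 : IsTestPlus (fun y => (f + g).1 (R + S - y)) :=
          ⟨t1.1.add t2.1, t1.2.1.add t2.2.1,
            (tsupport_add _ _).trans (Set.union_subset t1.2.2 t2.2.2)⟩
        obtain ⟨u, hu⟩ := W.test_mem _ t1
        obtain ⟨v, hv⟩ := W.test_mem _ t2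
        have r1 := hm f _ (by linarith) t1 u hu
        have r2 := hm g _ (by linarith) t2 v hv
        have r3 := hm (f + g) _ (by linarith) t3 (u + v) (by
          filter_upwards [hu, hv] with x e1 e2
          simp [e1, e2])
        refine r3.unique ?_
        rw [map_add, map_add]
        exact r1.add r2 (W.ii _) (W.ii _)
      map_smul' := by
        intro k f
        obtain ⟨R, h0, hR⟩ := IsTest.exists_R f.2
        have t1 := test_shift f.2 hR (show R < R + 1 by linarith)
        have t3 := test_shift (k • f).2 (R := R) (a := R + 1) (by
          intro x hx
          simp [hR x hx]) (by linarith)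
        obtain ⟨u, hu⟩ := W.test_mem _ t1
        have r1 := hm f _ (by linarith) t1 u hu
        have r3 := hm (k • f) _ (by linarith) t3 (k • u) (by
          filter_upwards [hu] with x e1
          simp [e1])
        refine r3.unique ?_
        rw [map_smul, map_smul]
        exact r1.smul k }
  obtain ⟨μ, hμ⟩ := LinearMap.exists_extend m'
  refine ⟨μ, fun g hg => ?_⟩
  have : μ g = m ⟨g, hg⟩ := congrArg (fun l => l ⟨g, hg⟩) hμ
  rw [this]
  exact hm ⟨g, hg⟩

/-- Every Wiener-Hopf operator `T` is given by convolution with a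
distribution `μ_T` of order `1`: `T f = P⁺ (μ_T ∗ f)` for `f ∈ C_c^∞((0,∞))`. -/
theorem wienerHopf_distribution (W : WHSpace) (T : W.E →L[ℂ] W.E)
    (hT : IsWienerHopf W T) :
    ∃ μ : (ℝ → ℂ) →ₗ[ℂ] ℂ,
      (∀ K : Set ℝ, IsCompact K → ∃ C > 0, ∀ g : ℝ → ℂ, IsTest g → tsupport g ⊆ K →
        ‖μ g‖ ≤ C * ((⨆ x : ℝ, ‖g x‖) + ⨆ x : ℝ, ‖deriv g x‖)) ∧
      ∀ (f : W.E) (g : ℝ → ℂ), IsTestPlus g → W.toFun f =ᵐ[volume] g →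
        ∀ᵐ x ∂(volume.restrict (Set.Ici (0 : ℝ))),
          W.toFun (T f) x = μ (fun z => g (x - z)) := by
  obtain ⟨μ, hμ⟩ := W.exists_mu hT
  refine ⟨μ, ?_, ?_⟩
  · intro K hK
    obtain ⟨R, hR0, hR⟩ := compact_bound hK
    obtain ⟨C, hC, hb⟩ := W.bound2 hT (a := 2) (b := 2 * R + 2) (by norm_num) (by linarith) (R + 2)
    refine ⟨C, hC, ?_⟩
    intro g hg hs
    have hz := zero_of_notMem (hs.trans hR)
    obtain ⟨M1, -, hM1⟩ := bdd_of_compact hg.1.continuous hg.2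
    obtain ⟨M2, -, hM2⟩ := bdd_of_compact (hg.1.continuous_deriv (by simp)) hg.2.deriv
    have hA : ∀ x, ‖g x‖ ≤ ⨆ x, ‖g x‖ := fun x =>
      le_ciSup (f := fun x => ‖g x‖) ⟨M1, by rintro _ ⟨y, rfl⟩; exact hM1 y⟩ x
    have hB : ∀ x, ‖deriv g x‖ ≤ ⨆ x, ‖deriv g x‖ := fun x =>
      le_ciSup (f := fun x => ‖deriv g x‖) ⟨M2, by rintro _ ⟨y, rfl⟩; exact hM2 y⟩ x
    set A := ⨆ x, ‖g x‖
    set B := ⨆ x, ‖deriv g x‖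
    have hA0 : 0 ≤ A := (norm_nonneg _).trans (hA 0)
    have hB0 : 0 ≤ B := (norm_nonneg _).trans (hB 0)
    have ht := test_shift hg hz (show R < R + 2 by linarith)
    obtain ⟨u, hu⟩ := W.test_mem _ ht
    have hr := hμ g hg (R + 2) (by linarith) ht u hu
    have key : ∀ ε > 0, ‖μ g‖ ≤ C * (A + B + ε) := by
      intro ε hε
      refine hb u _ (A + B + ε) (by linarith) ht.1 ?_ ?_ ?_ hu (R + 2) _ (by linarith) le_rfl hr
      · intro x hx
        exact hz _ (fun h => hx ⟨by linarith [h.2], by linarith [h.1]⟩)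
      · intro x
        linarith [hA (R + 2 - x)]
      · intro x
        rw [deriv_comp_const_sub, norm_neg]
        linarith [hB (R + 2 - x)]
    refine le_of_forall_pos_le_add fun δ hδ => ?_
    have := key (δ / C) (by positivity)
    have e : C * (A + B + δ / C) = C * (A + B) + δ := by field_simp
    linarith
  · intro f g hg hf
    have h1 := ae_restrict_of_ae (s := Set.Ici (0 : ℝ)) (rd_ae (W.locInt (T f)))
    filter_upwards [h1, ae_restrict_mem measurableSet_Ici] with x hx (h0 : 0 ≤ x)
    have hgt : IsTest (fun z => g (x - z)) :=
      ⟨hg.1.comp (contDiff_const.sub contDiff_id),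
        hg.2.1.comp_homeomorph (Homeomorph.subLeft x)⟩
    have e : (fun y => g (x - (x - y))) = g := by funext y; simp
    refine hx.unique (hμ _ hgt x h0 ?_ f ?_)
    · rw [e]; exact hg
    · rw [e]; exact hf
end
end

section
/- Let E be a complex Banach space of functions on ℝ⁺ satisfying (H1), (H2), (H3). There exists a constant C > 0, depending only on E, such that for every Wiener-Hopf operator T on E there is a sequence (φ_n)_{n∈ℕ} ⊂ C_c^∞(ℝ) with lim_{n→∞} ‖T_{φ_n} f − T f‖ = 0 for every f ∈ E, and ‖T_{φ_n}‖ ≤ C ‖T‖ for all n ∈ ℕ. -/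
open Complex Filter Topology

noncomputable section

open MeasureTheory

open Complex Filter Topology MeasureTheory

/-- joint smoothness of iterated partial derivatives -/
theorem wh_jointly_smooth (k : ℕ) : ∀ (u : ℝ → ℝ → ℂ),
    ContDiff ℝ (⊤ : ℕ∞) (Function.uncurry u) →
    ContDiff ℝ (⊤ : ℕ∞) (Function.uncurry fun a x => iteratedDeriv k (u a) x) := by
  induction k with
  | zero => intro u hu; simpa [iteratedDeriv_zero] using hu
  | succ k ih =>
    intro u hu
    have h1 : ContDiff ℝ (⊤ : ℕ∞) (Function.uncurry fun a x => deriv (u a) x) := by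
      have : (Function.uncurry fun a x => deriv (u a) x) =
          fun p : ℝ × ℝ => fderiv ℝ (Function.uncurry u) p (0, 1) := by
        ext ⟨a, x⟩
        have hd : HasFDerivAt (Function.uncurry u) (fderiv ℝ (Function.uncurry u) (a, x)) (a, x) :=
          (hu.differentiable (by simp) (a, x)).hasFDerivAt
        have hl : HasDerivAt (fun y : ℝ => ((a, y) : ℝ × ℝ)) (0, 1) x :=
          (hasDerivAt_const x a).prodMk (hasDerivAt_id x)
        have := hd.comp_hasDerivAt x hl
        exact this.deriv
      rw [this]
      exact (hu.fderiv_right (m := (⊤ : ℕ∞)) (by simp)).clm_apply contDiff_const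
    simp_rw [iteratedDeriv_succ']
    exact ih (fun a => deriv (u a)) h1

theorem wh_support_iteratedDeriv (k : ℕ) (g : ℝ → ℂ) (x : ℝ) (hx : x ∉ tsupport g) :
    iteratedDeriv k g x = 0 := by
  rw [iteratedDeriv_eq_iteratedFDeriv]
  have : x ∉ Function.support (iteratedFDeriv ℝ k g) :=
    fun h => hx (support_iteratedFDeriv_subset k h)
  rw [Function.notMem_support] at this
  simp [this]

/-- Continuity in `E` of a jointly smooth family of test functions. -/
theorem wh_cont_family (W : WHSpace) (u : ℝ → ℝ → ℂ)
    (hu : ContDiff ℝ (⊤ : ℕ∞) (Function.uncurry u)) (s : Set ℝ) (K : Set ℝ) (hK : IsCompact K)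
    (hK0 : K ⊆ Set.Ioi 0) (hs : ∀ a ∈ s, tsupport (u a) ⊆ K) (F : ℝ → W.E)
    (hF : ∀ a ∈ s, W.toFun (F a) =ᵐ[volume] u a) : ContinuousOn F s := by
  have hua : ∀ a, ContDiff ℝ (⊤ : ℕ∞) (u a) := fun a =>
    hu.comp (contDiff_const.prodMk contDiff_id)
  obtain ⟨C, hC, N, hN⟩ := W.test_cont K hK
  intro b hb
  rw [ContinuousWithinAt, tendsto_iff_norm_sub_tendsto_zero]
  rw [Metric.tendsto_nhds]
  intro ε hε
  set δ : ℝ := ε / (2 * C * (N + 1)) with hδ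
  have hδ0 : 0 < δ := by positivity
  have key : ∀ k, ∀ᶠ a in 𝓝 b, ∀ x ∈ K,
      ‖iteratedDeriv k (u a) x - iteratedDeriv k (u b) x‖ < δ := by
    intro k
    have hc := (wh_jointly_smooth k u hu).continuous
    let G : C(ℝ × ℝ, ℂ) := ⟨_, hc⟩
    have h1 : Tendsto (fun a => G.curry a) (𝓝 b) (𝓝 (G.curry b)) := G.curry.continuous.tendsto b
    rw [ContinuousMap.tendsto_iff_forall_isCompact_tendstoUniformlyOn] at h1
    have h2 := Metric.tendstoUniformlyOn_iff.1 (h1 K hK) δ hδ0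
    filter_upwards [h2] with a ha x hx
    have := ha x hx
    rw [dist_comm, dist_eq_norm] at this
    exact this
  have key2 : ∀ᶠ a in 𝓝 b, ∀ k ∈ Finset.range (N + 1), ∀ x ∈ K,
      ‖iteratedDeriv k (u a) x - iteratedDeriv k (u b) x‖ < δ := by
    rw [Filter.eventually_all_finset]
    exact fun k _ => key k
  filter_upwards [nhdsWithin_le_nhds key2, self_mem_nhdsWithin] with a ha has
  have hts : tsupport (u a - u b) ⊆ K := by
    refine closure_minimal ?_ hK.isClosed
    intro x hx
    by_contra hxK
    apply hx
    have h1 : u a x = 0 := image_eq_zero_of_notMem_tsupport fun h => hxK (hs a has h)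
    have h2 : u b x = 0 := image_eq_zero_of_notMem_tsupport fun h => hxK (hs b hb h)
    simp [h1, h2]
  have htest : IsTestPlus (u a - u b) :=
    ⟨(hua a).sub (hua b), hK.of_isClosed_subset isClosed_closure hts, hts.trans hK0⟩
  have hae : W.toFun (F a - F b) =ᵐ[volume] (u a - u b) := by
    rw [map_sub]
    exact (hF a has).sub (hF b hb)
  have hb1 := hN (F a - F b) _ htest hts hae
  have hb2 : ∑ k ∈ Finset.range (N + 1), ⨆ x : ℝ, ‖iteratedDeriv k (u a - u b) x‖
      ≤ ∑ k ∈ Finset.range (N + 1), δ := by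
    refine Finset.sum_le_sum fun k hk => ciSup_le fun x => ?_
    by_cases hx : x ∈ K
    · have := ha k hk x hx
      rw [iteratedDeriv_sub ((hua a).of_le (by exact_mod_cast le_top)).contDiffAt
        ((hua b).of_le (by exact_mod_cast le_top)).contDiffAt]
      exact this.le
    · rw [wh_support_iteratedDeriv k _ x fun h => hx (hts h)]
      simpa using hδ0.le
  rw [Finset.sum_const, Finset.card_range, nsmul_eq_mul] at hb2
  rw [Real.dist_eq, sub_zero, abs_norm]
  calc ‖F a - F b‖ ≤ C * (((N + 1 : ℕ) : ℝ) * δ) := hb1.trans (by gcongr)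
    _ = ε / 2 := by rw [hδ]; push_cast; field_simp
    _ < ε := by linarith

/-- strong continuity passes to the closure -/
theorem wh_cont_dense (W : WHSpace) (P : ℝ → W.E →L[ℂ] W.E) (s : Set ℝ) (C : ℝ)
    (hC : ∀ a ∈ s, ‖P a‖ ≤ C)
    (h : ∀ (f : W.E) (g : ℝ → ℂ), IsTestPlus g → W.toFun f =ᵐ[volume] g →
      ContinuousOn (fun a => P a f) s) (f : W.E) : ContinuousOn (fun a => P a f) s := by
  apply continuousOn_of_uniform_approx_of_continuousOn
  intro U hU
  obtain ⟨ε, hε, hεU⟩ := Metric.mem_uniformity_dist.1 hU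
  set D := |C| + 1
  have hD : 0 < D := by positivity
  obtain ⟨f', hf', hd⟩ := W.test_dense.exists_dist_lt f (ε := ε / D) (by positivity)
  obtain ⟨g, hg, hfg⟩ := hf'
  refine ⟨_, h f' g hg hfg, fun a ha => hεU ?_⟩
  rw [dist_eq_norm, ← map_sub]
  rw [dist_eq_norm] at hd
  calc ‖P a (f - f')‖ ≤ ‖P a‖ * ‖f - f'‖ := (P a).le_opNorm _
    _ ≤ D * ‖f - f'‖ := by
      gcongr
      exact (hC a ha).trans ((le_abs_self C).trans (by simp [D]))
    _ < D * (ε / D) := by gcongr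
    _ = ε := by field_simp

theorem wh_modFun_test (g : ℝ → ℂ) (hg : IsTestPlus g) (a : ℝ) : IsTestPlus (modFun a g) := by
  have hts : tsupport (modFun a g) ⊆ tsupport g := by
    refine closure_mono fun x hx => ?_
    intro h
    exact hx (by simp [modFun, h])
  refine ⟨?_, hg.2.1.of_isClosed_subset isClosed_closure hts, hts.trans hg.2.2⟩
  have := hg.1
  unfold modFun
  have h1 : ContDiff ℝ (⊤ : ℕ∞) (fun x : ℝ => (x : ℂ)) := Complex.ofRealCLM.contDiff
  exact ((contDiff_const.mul h1).cexp).mul this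

theorem wh_Mod_cont (W : WHSpace) (f : W.E) : Continuous fun a => W.Mod a f := by
  obtain ⟨C, hC⟩ := W.Mod_bdd
  rw [← continuousOn_univ]
  refine wh_cont_dense W W.Mod Set.univ C (fun a _ => hC a) ?_ f
  intro f g hg hfg
  refine wh_cont_family W (fun a => modFun a g) ?_ _ (tsupport g) hg.2.1 hg.2.2 ?_ _ ?_
  · have := hg.1
    unfold modFun Function.uncurry
    have h1 : ContDiff ℝ (⊤ : ℕ∞) (fun x : ℝ => (x : ℂ)) := Complex.ofRealCLM.contDiff
    exact (((contDiff_const.mul (h1.comp contDiff_fst)).mul (h1.comp contDiff_snd)).cexp).mul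
      (this.comp contDiff_snd)
  · intro a _
    refine closure_mono fun x hx => ?_
    intro h
    exact hx (by simp [modFun, h])
  · intro a _
    filter_upwards [W.Mod_spec a f, hfg] with x h1 h2
    rw [h1]; simp [modFun, h2]

/-- a.e. statements can be translated -/
theorem wh_ae_shift {p : ℝ → Prop} (h : ∀ᵐ x ∂(volume : Measure ℝ), p x) (a : ℝ) :
    ∀ᵐ x ∂(volume : Measure ℝ), p (x - a) :=
  (measurePreserving_sub_right volume a).quasiMeasurePreserving.ae h

theorem wh_test_neg (g : ℝ → ℂ) (hg : IsTestPlus g) (x : ℝ) (hx : x ≤ 0) : g x = 0 :=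
  image_eq_zero_of_notMem_tsupport fun h => absurd (hg.2.2 h) (by simpa using hx)

theorem wh_S_test (W : WHSpace) (f : W.E) (g : ℝ → ℂ) (hg : IsTestPlus g)
    (hfg : W.toFun f =ᵐ[volume] g) (a : ℝ) (ha : 0 ≤ a) :
    W.toFun (W.S a f) =ᵐ[volume] fun x => g (x - a) := by
  filter_upwards [W.S_spec a f, wh_ae_shift hfg a] with x h1 h2
  rw [h1, transFun]
  split_ifs with h
  · exact h2
  · rw [wh_test_neg g hg]; linarith

open scoped Pointwise in
theorem wh_S_cont (W : WHSpace) (R : ℝ) (f : W.E) :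
    ContinuousOn (fun a => W.S a f) (Set.Icc 0 R) := by
  obtain ⟨C, hC⟩ := W.S_bdd (Set.Icc 0 R) isCompact_Icc
  refine wh_cont_dense W W.S _ C hC ?_ f
  intro f g hg hfg
  have hadd : IsCompact (tsupport g + Set.Icc 0 R) := hg.2.1.isCompact.add isCompact_Icc
  refine wh_cont_family W (fun a x => g (x - a)) ?_ _ (tsupport g + Set.Icc 0 R) hadd ?_ ?_ _ ?_
  · exact hg.1.comp (contDiff_snd.sub contDiff_fst)
  · rintro _ ⟨x, hx, y, hy, rfl⟩
    have := hg.2.2 hx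
    simp only [Set.mem_Ioi] at this ⊢
    linarith [hy.1]
  · intro a ha
    refine closure_minimal ?_ hadd.isClosed
    intro x hx
    exact ⟨x - a, subset_closure hx, a, ha, by simp⟩
  · intro a ha
    exact wh_S_test W f g hg hfg a ha.1

open Complex Filter Topology MeasureTheory

/-- pairing with a compactly supported continuous function is continuous on `E` -/
theorem wh_pairing (W : WHSpace) (h : ℝ → ℝ) (hc : Continuous h) (hs : HasCompactSupport h) :
    ∃ L : W.E →L[ℂ] ℂ, ∀ f, L f = ∫ x, h x • W.toFun f x := by
  obtain ⟨M, hM⟩ := hc.bounded_above_of_compact_support hs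
  obtain ⟨C, hC, hCf⟩ := W.incl_cont (tsupport h) hs
  have hIntg : ∀ f : W.E, Integrable (fun x => h x • W.toFun f x) := fun f =>
    (W.locInt f).integrable_smul_left_of_hasCompactSupport hc hs
  have hM0 : 0 ≤ M := (norm_nonneg _).trans (hM 0)
  let l : W.E →ₗ[ℂ] ℂ :=
    { toFun := fun f => ∫ x, h x • W.toFun f x
      map_add' := by
        intro f g
        rw [← integral_add (hIntg f) (hIntg g)]
        simp
      map_smul' := by
        intro c f
        simp only [map_smul, Pi.smul_apply, RingHom.id_apply]
        rw [← integral_smul]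
        congr 1; ext x
        rw [smul_comm] }
  refine ⟨l.mkContinuous (M * C) ?_, fun f => rfl⟩
  intro f
  change ‖∫ x, h x • W.toFun f x‖ ≤ _
  have h1 : ∫ x, h x • W.toFun f x = ∫ x in tsupport h, h x • W.toFun f x := by
    rw [setIntegral_eq_integral_of_forall_compl_eq_zero]
    intro x hx
    rw [image_eq_zero_of_notMem_tsupport hx, zero_smul]
  rw [h1]
  calc ‖∫ x in tsupport h, h x • W.toFun f x‖
      ≤ ∫ x in tsupport h, M * ‖W.toFun f x‖ := by
        refine norm_integral_le_of_norm_le ?_ (ae_of_all _ fun x => ?_)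
        · exact (((W.locInt f).integrableOn_isCompact hs).norm).const_mul M
        · rw [norm_smul]; gcongr; exact hM x
    _ = M * ∫ x in tsupport h, ‖W.toFun f x‖ := integral_const_mul _ _
    _ ≤ M * (C * ‖f‖) := by gcongr; exact hCf f
    _ = M * C * ‖f‖ := by ring

/-- Pointwise representation of `E`-valued Bochner integrals. -/
theorem wh_int_rep (W : WHSpace) (F : ℝ → W.E) (hF : Integrable F) (u : ℝ → ℝ → ℂ)
    (hu : ∀ a, ∀ᵐ x ∂(volume.restrict (Set.Ici (0 : ℝ))), W.toFun (F a) x = u a x)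
    (hi : ∀ K : Set ℝ, IsCompact K →
      Integrable (Function.uncurry u) ((volume : Measure ℝ).prod (volume.restrict K))) :
    ∀ᵐ x ∂(volume.restrict (Set.Ici (0 : ℝ))), W.toFun (∫ a, F a) x = ∫ a, u a x := by
  have hloc : LocallyIntegrable (fun x => ∫ a, u a x) volume := by
    rw [locallyIntegrable_iff]
    intro K hK
    exact (hi K hK).integral_prod_right
  have key := (isOpen_Ioi (a := (0 : ℝ))).ae_eq_zero_of_integral_contDiff_smul_eq_zero
    (f := fun x => W.toFun (∫ a, F a) x - ∫ a, u a x) (μ := volume)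
    (((W.locInt _).sub hloc).locallyIntegrableOn _) ?_
  · rw [ae_restrict_iff' measurableSet_Ici]
    have h0 : ∀ᵐ x ∂(volume : Measure ℝ), x ≠ 0 := by simp [ae_iff]
    filter_upwards [key, h0] with x hx hx0 hx1
    exact sub_eq_zero.1 (hx (lt_of_le_of_ne hx1 (Ne.symm hx0)))
  · intro h hsm hcs hts
    have hc : Continuous h := hsm.continuous
    obtain ⟨L, hL⟩ := wh_pairing W h hc hcs
    obtain ⟨M, hM⟩ := hc.bounded_above_of_compact_support hcs
    simp_rw [smul_sub]
    rw [integral_sub ((W.locInt _).integrable_smul_left_of_hasCompactSupport hc hcs)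
      (hloc.integrable_smul_left_of_hasCompactSupport hc hcs), ← hL, sub_eq_zero,
      ← L.integral_comp_comm hF]
    have h1 : ∀ a, L (F a) = ∫ x in tsupport h, h x • u a x := by
      intro a
      rw [hL, setIntegral_eq_integral_of_forall_compl_eq_zero]
      · apply integral_congr_ae
        have := hu a
        rw [ae_restrict_iff' measurableSet_Ici] at this
        filter_upwards [this] with x hx
        by_cases hxs : x ∈ tsupport h
        · rw [hx (Set.mem_Ici.2 (le_of_lt (Set.mem_Ioi.1 (hts hxs))))]
        · rw [image_eq_zero_of_notMem_tsupport hxs, zero_smul, zero_smul]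
      · intro x hx
        rw [image_eq_zero_of_notMem_tsupport hx, zero_smul]
    simp_rw [h1]
    rw [integral_integral_swap]
    · simp_rw [integral_smul]
      rw [setIntegral_eq_integral_of_forall_compl_eq_zero]
      intro x hx
      rw [image_eq_zero_of_notMem_tsupport hx, zero_smul]
    · refine Integrable.bdd_smul (φ := fun p : ℝ × ℝ => h p.2) (hi _ hcs) M ?_ ?_
      · exact (hc.comp continuous_snd).aestronglyMeasurable
      · exact ae_of_all _ fun p => hM _

open Complex Filter Topology MeasureTheory

theorem wh_test_supp (θ : ℝ → ℂ) (hθ : IsTestPlus θ) :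
    ∃ R > 0, ∀ y, y ∉ Set.Icc 0 R → θ y = 0 := by
  obtain ⟨R, hR⟩ := hθ.2.1.isCompact.isBounded.subset_closedBall 0
  refine ⟨max R 1, by positivity, fun y hy => ?_⟩
  apply image_eq_zero_of_notMem_tsupport
  intro h
  apply hy
  have h1 := hR h
  have h2 := hθ.2.2 h
  simp only [Metric.mem_closedBall, dist_zero_right, Real.norm_eq_abs, Set.mem_Ioi] at h1 h2
  exact ⟨h2.le, ((le_abs_self y).trans h1).trans (le_max_left _ _)⟩

theorem wh_S_integrable (W : WHSpace) (θ : ℝ → ℂ) (hθ : IsTestPlus θ) (f : W.E) :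
    Integrable fun y => θ y • W.S y f := by
  obtain ⟨R, hR, hs⟩ := wh_test_supp θ hθ
  have h1 : ContinuousOn (fun y => θ y • W.S y f) (Set.Icc 0 R) :=
    hθ.1.continuous.continuousOn.smul (wh_S_cont W R f)
  rw [← integrableOn_iff_integrable_of_support_subset (s := Set.Icc 0 R)]
  · exact h1.integrableOn_compact isCompact_Icc
  · intro y hy
    by_contra hc
    exact hy (by simp [hs y hc])

theorem wh_M_bound (W : WHSpace) (θ : ℝ → ℂ) (hθ : IsTestPlus θ) (R C : ℝ)
    (hs : ∀ y, y ∉ Set.Icc 0 R → θ y = 0) (hC : ∀ y ∈ Set.Icc 0 R, ‖W.S y‖ ≤ C) (f : W.E) :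
    ‖∫ y, θ y • W.S y f‖ ≤ (C * ∫ y, ‖θ y‖) * ‖f‖ := by
  have hi : Integrable θ := hθ.1.continuous.integrable_of_hasCompactSupport hθ.2.1
  calc ‖∫ y, θ y • W.S y f‖ ≤ ∫ y, ‖θ y‖ * (C * ‖f‖) := by
        refine norm_integral_le_of_norm_le (hi.norm.mul_const _) (ae_of_all _ fun y => ?_)
        rw [norm_smul]
        by_cases hy : y ∈ Set.Icc 0 R
        · gcongr
          exact (W.S y).le_of_opNorm_le (hC y hy) f
        · simp [hs y hy]
    _ = _ := by rw [integral_mul_const]; ring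

theorem wh_M_exists (W : WHSpace) (θ : ℝ → ℂ) (hθ : IsTestPlus θ) :
    ∃ M : W.E →L[ℂ] W.E, ∀ f, M f = ∫ y, θ y • W.S y f := by
  obtain ⟨R, hR, hs⟩ := wh_test_supp θ hθ
  obtain ⟨C, hC⟩ := W.S_bdd (Set.Icc 0 R) isCompact_Icc
  let l : W.E →ₗ[ℂ] W.E :=
    { toFun := fun f => ∫ y, θ y • W.S y f
      map_add' := by
        intro f g
        rw [← integral_add (wh_S_integrable W θ hθ f) (wh_S_integrable W θ hθ g)]
        simp
      map_smul' := by
        intro c f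
        simp only [map_smul, RingHom.id_apply]
        rw [← integral_smul]
        congr 1; ext x
        rw [smul_comm] }
  exact ⟨l.mkContinuous _ (wh_M_bound W θ hθ R C hs hC), fun f => rfl⟩

open scoped Pointwise in
/-- convolution of test functions -/
theorem wh_conv_test (θ g : ℝ → ℂ) (hθ : IsTestPlus θ) (hg : IsTestPlus g) :
    IsTestPlus (fun x => ∫ y, θ y * g (x - y)) := by
  have e : (fun x => ∫ y, θ y * g (x - y)) = convolution θ g (ContinuousLinearMap.mul ℝ ℂ) volume := by
    ext x; rfl
  rw [e]
  refine ⟨?_, ?_, ?_⟩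
  · exact hg.2.1.contDiff_convolution_right _ (hθ.1.continuous.locallyIntegrable) hg.1
  · exact hθ.2.1.convolution _ hg.2.1
  · have hsub := support_convolution_subset (f := θ) (g := g) (ContinuousLinearMap.mul ℝ ℂ)
      (μ := volume)
    have hk : IsCompact (tsupport θ + tsupport g) := hθ.2.1.isCompact.add hg.2.1.isCompact
    have : tsupport (convolution θ g (ContinuousLinearMap.mul ℝ ℂ) volume)
        ⊆ tsupport θ + tsupport g := by
      refine closure_minimal ?_ hk.isClosed
      exact hsub.trans (Set.add_subset_add subset_closure subset_closure)
    refine this.trans ?_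
    rintro _ ⟨x, hx, y, hy, rfl⟩
    have h1 := hθ.2.2 hx
    have h2 := hg.2.2 hy
    simp only [Set.mem_Ioi] at *
    linarith

open scoped Pointwise in
/-- local integrability of the convolution integrand -/
theorem wh_conv_integrable (g ψ : ℝ → ℂ) (hg : Continuous g) (hgs : HasCompactSupport g)
    (hψ : LocallyIntegrable ψ) (K : Set ℝ) (hK : IsCompact K) :
    Integrable (Function.uncurry fun y x : ℝ => g y * ψ (x - y))
      ((volume : Measure ℝ).prod (volume.restrict K)) := by
  set K' : Set ℝ := K - tsupport g
  have hK' : IsCompact K' := by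
    simp only [K', sub_eq_add_neg]; exact hK.add hgs.isCompact.neg
  have h1 : Integrable (K'.indicator ψ) := by
    rw [integrable_indicator_iff hK'.measurableSet]
    exact hψ.integrableOn_isCompact hK'
  have h2 : Integrable g := hg.integrable_of_hasCompactSupport hgs
  have h3 := (h2.convolution_integrand (ContinuousLinearMap.mul ℝ ℂ) h1).swap
  have h4 : Integrable (Function.uncurry fun y x : ℝ => g y * K'.indicator ψ (x - y))
      ((volume : Measure ℝ).prod (volume.restrict K)) := by
    have : ((volume : Measure ℝ).prod (volume.restrict K)) =
        ((volume : Measure ℝ).prod volume).restrict (Set.univ ×ˢ K) := by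
      rw [← Measure.prod_restrict, Measure.restrict_univ]
    rw [this]
    exact Integrable.restrict h3
  refine h4.congr ?_
  have : ((volume : Measure ℝ).prod (volume.restrict K)) =
        ((volume : Measure ℝ).prod volume).restrict (Set.univ ×ˢ K) := by
      rw [← Measure.prod_restrict, Measure.restrict_univ]
  rw [this]
  filter_upwards [ae_restrict_mem (MeasurableSet.univ.prod hK.measurableSet)] with p hp
  rcases p with ⟨y, x⟩
  simp only [Function.uncurry]
  by_cases hy : y ∈ tsupport g
  · rw [Set.indicator_of_mem]
    exact ⟨x, hp.2, y, hy, rfl⟩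
  · rw [image_eq_zero_of_notMem_tsupport hy, zero_mul, zero_mul]

/-- `M_θ` is the convolution with `θ`. -/
theorem wh_M_conv (W : WHSpace) (θ : ℝ → ℂ) (hθ : IsTestPlus θ) (f : W.E) (g : ℝ → ℂ)
    (hg : IsTestPlus g) (hfg : W.toFun f =ᵐ[volume] g) :
    W.toFun (∫ y, θ y • W.S y f) =ᵐ[volume] fun x => ∫ y, θ y * g (x - y) := by
  have h := wh_int_rep W (fun y => θ y • W.S y f) (wh_S_integrable W θ hθ f)
    (fun y x => θ y * g (x - y)) ?_ ?_
  · rw [ae_restrict_iff' measurableSet_Ici] at h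
    filter_upwards [h, W.supp (∫ y, θ y • W.S y f)] with x h1 h2
    by_cases hx : 0 ≤ x
    · exact h1 hx
    · rw [h2 (not_le.1 hx)]
      exact (wh_test_neg _ (wh_conv_test θ g hθ hg) x (not_le.1 hx).le).symm
  · intro y
    apply ae_restrict_of_ae
    by_cases hy : 0 ≤ y
    · filter_upwards [wh_S_test W f g hg hfg y hy] with x hx
      simp [hx]
    · simp [wh_test_neg θ hθ y (not_le.1 hy).le]
  · intro K hK
    exact wh_conv_integrable θ g hθ.1.continuous hθ.2.1 hg.1.continuous.locallyIntegrable K hK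

theorem wh_M_comm (W : WHSpace) (f t : W.E) (g θ : ℝ → ℂ) (hg : IsTestPlus g) (hθ : IsTestPlus θ)
    (hfg : W.toFun f =ᵐ[volume] g) (htθ : W.toFun t =ᵐ[volume] θ) :
    ∫ y, θ y • W.S y f = ∫ y, g y • W.S y t := by
  apply W.inj
  refine (wh_M_conv W θ hθ f g hg hfg).trans (EventuallyEq.trans ?_ (wh_M_conv W g hg t θ hθ htθ).symm)
  refine ae_of_all _ fun x => ?_
  simp only
  rw [← integral_sub_left_eq_self _ volume x]
  simp [mul_comm]

theorem wh_S_add (W : WHSpace) (a c : ℝ) (hc : 0 ≤ c) (t : W.E) :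
    W.S a (W.S c t) = W.S (a + c) t := by
  apply W.inj
  filter_upwards [W.S_spec a (W.S c t), wh_ae_shift (W.S_spec c t) a, W.S_spec (a + c) t,
    wh_ae_shift (W.supp t) (a + c)] with x h1 h2 h3 h4
  rw [h1, h3]
  simp only [transFun] at h2 ⊢
  split_ifs with hx
  · rw [h2]
    split_ifs with hxa
    · rw [sub_sub]
    · rw [h4]; linarith
  · rfl

/-- The kernel of `T` applied to `θ`. -/
theorem wh_kernel (W : WHSpace) (T : W.E →L[ℂ] W.E) (hT : IsWienerHopf W T) (t : W.E) :
    ∃ ψ : ℝ → ℂ, LocallyIntegrable ψ ∧ ∀ b, 0 ≤ b →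
      ∀ᵐ x ∂(volume.restrict (Set.Ici (0 : ℝ))), W.toFun (T (W.S b t)) x = ψ (x - b) := by
  set v : ℝ → ℝ → ℂ := fun b => W.toFun (T (W.S b t)) with hv
  have hcons : ∀ c b : ℝ, 0 ≤ c → c ≤ b → ∀ᵐ x ∂(volume : Measure ℝ), 0 ≤ x + c →
      v c (x + c) = v b (x + b) := by
    intro c b hc hcb
    have h1 : W.S (-(b - c)) (T (W.S b t)) = T (W.S c t) := by
      have := congrArg (fun A => A (W.S c t)) (hT (b - c) (by linarith))
      simp only [ContinuousLinearMap.comp_apply] at this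
      rw [wh_S_add W (b - c) c hc] at this
      simpa using this
    have h2 := W.S_spec (-(b - c)) (T (W.S b t))
    rw [h1] at h2
    have h3 := wh_ae_shift h2 (-c)
    filter_upwards [h3] with x hx hx0
    simp only [sub_neg_eq_add] at hx
    rw [hv]
    simp only
    rw [hx, transFun, if_pos hx0]
    ring_nf
  set ψ : ℝ → ℂ := fun x => v (⌈-x⌉₊ : ℝ) (x + (⌈-x⌉₊ : ℝ)) with hψ
  have hψn : ∀ n : ℕ, ∀ᵐ (x : ℝ) ∂(volume : Measure ℝ), 0 ≤ x + n → ψ x = v n (x + n) := by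
    intro n
    have h1 : ∀ᵐ (x : ℝ) ∂(volume : Measure ℝ), ∀ m : ℕ, m ≤ n → 0 ≤ x + m →
        v m (x + m) = v n (x + n) := by
      rw [ae_all_iff]
      intro m
      by_cases hm : m ≤ n
      · filter_upwards [hcons m n (by positivity) (by exact_mod_cast hm)] with x hx _
        exact hx
      · exact ae_of_all _ fun x h => absurd h hm
    filter_upwards [h1] with x hx hx0
    refine hx _ ?_ ?_
    · rw [Nat.ceil_le]; linarith
    · have := Nat.le_ceil (-x); linarith
  refine ⟨ψ, ?_, ?_⟩
  · rw [locallyIntegrable_iff]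
    intro K hK
    obtain ⟨R, hR⟩ := hK.isBounded.subset_closedBall 0
    obtain ⟨n, hn⟩ := exists_nat_ge R
    have h1 : IntegrableOn (fun x => v n (x + n)) K := by
      have hmp := measurePreserving_add_right (volume : Measure ℝ) (n : ℝ)
      have hK2 : IsCompact ((fun x => x + (n : ℝ)) '' K) := hK.image (by fun_prop)
      have := (hmp.integrableOn_image (measurableEmbedding_addRight (n : ℝ)) (f := v n) (s := K)).1
        ((W.locInt _).integrableOn_isCompact hK2)
      exact this
    refine IntegrableOn.congr_fun_ae h1 ?_
    filter_upwards [ae_restrict_of_ae (hψn n), ae_restrict_mem hK.measurableSet] with x hx hxK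
    refine (hx ?_).symm
    have := hR hxK
    simp only [Metric.mem_closedBall, dist_zero_right, Real.norm_eq_abs] at this
    have := (abs_le.1 this).1
    linarith
  · intro b hb
    obtain ⟨n, hn⟩ := exists_nat_ge b
    rw [ae_restrict_iff' measurableSet_Ici]
    filter_upwards [wh_ae_shift (hcons b n hb hn) b, wh_ae_shift (hψn n) b] with x h1 h2 hx
    simp only [sub_add_cancel, Set.mem_Ici] at h1 hx
    rw [h2 (by linarith), ← h1 hx]

open Complex Filter Topology MeasureTheory

theorem wh_TM_conv (W : WHSpace) (T : W.E →L[ℂ] W.E) (hT : IsWienerHopf W T)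
    (θ : ℝ → ℂ) (hθ : IsTestPlus θ) (M : W.E →L[ℂ] W.E) (hM : ∀ f, M f = ∫ y, θ y • W.S y f) :
    ∃ ψ : ℝ → ℂ, LocallyIntegrable ψ ∧ IsConvOp W ψ (T.comp M) := by
  obtain ⟨t, ht⟩ := W.test_mem θ hθ
  obtain ⟨ψ, hψ, hψT⟩ := wh_kernel W T hT t
  refine ⟨ψ, hψ, ?_⟩
  intro f g hg hfg
  have hi := wh_S_integrable W g hg t
  have h1 : (T.comp M) f = ∫ y, T (g y • W.S y t) := by
    rw [ContinuousLinearMap.comp_apply, hM, wh_M_comm W f t g θ hg hθ hfg ht,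
      ← T.integral_comp_comm hi]
  rw [h1]
  have h := wh_int_rep W (fun y => T (g y • W.S y t)) (T.integrable_comp hi)
    (fun y x => g y * ψ (x - y)) ?_ ?_
  · filter_upwards [h] with x hx
    rw [hx, ← integral_sub_left_eq_self _ volume x]
    simp [mul_comm]
  · intro y
    by_cases hy : 0 ≤ y
    · filter_upwards [hψT y hy] with x hx
      simp [hx]
    · simp [wh_test_neg g hg y (not_le.1 hy).le]
  · intro K hK
    exact wh_conv_integrable g ψ hg.1.continuous hg.2.1 hψ K hK

theorem wh_TMM_conv (W : WHSpace) (T : W.E →L[ℂ] W.E) (hT : IsWienerHopf W T)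
    (θ : ℝ → ℂ) (hθ : IsTestPlus θ) (M : W.E →L[ℂ] W.E) (hM : ∀ f, M f = ∫ y, θ y • W.S y f) :
    ∃ φ : ℝ → ℂ, ContDiff ℝ (⊤ : ℕ∞) φ ∧ IsConvOp W φ ((T.comp M).comp M) := by
  obtain ⟨ψ, hψ, hψc⟩ := wh_TM_conv W T hT θ hθ M hM
  refine ⟨convolution ψ θ (ContinuousLinearMap.mul ℝ ℂ) volume,
    hθ.2.1.contDiff_convolution_right _ hψ hθ.1, ?_⟩
  intro f g hg hfg
  have h1 := hψc (M f) _ (wh_conv_test θ g hθ hg) (by rw [hM]; exact wh_M_conv W θ hθ f g hg hfg)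
  filter_upwards [h1] with x hx
  rw [ContinuousLinearMap.comp_apply, hx]
  symm
  have hcθ := hθ.1.continuous
  have hcg := hg.1.continuous
  refine convolution_assoc (ContinuousLinearMap.mul ℝ ℂ) (ContinuousLinearMap.mul ℝ ℂ)
    (ContinuousLinearMap.mul ℝ ℂ) (ContinuousLinearMap.mul ℝ ℂ) (f := ψ) (g := θ) (k := g)
    (μ := volume) (ν := volume) (x₀ := x) ?_
    hψ.aestronglyMeasurable hcθ.aestronglyMeasurable hcg.aestronglyMeasurable ?_ ?_ ?_
  · intro a b c; simp [mul_assoc]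
  · exact ae_of_all _ fun y => hθ.2.1.convolutionExists_right _ hψ hcθ y
  · exact ae_of_all _ fun y => hg.2.1.norm.convolutionExists_right _
      hcθ.norm.locallyIntegrable hcg.norm y
  · refine HasCompactSupport.convolutionExists_right _ ?_ (fun y => (hψ y).norm) ?_ x
    · exact hθ.2.1.norm.convolution _ hg.2.1.norm
    · exact hg.2.1.norm.continuous_convolution_right _ hcθ.norm.locallyIntegrable hcg.norm

/-- conjugation by modulations -/
theorem wh_Mod_conj (W : WHSpace) (φ : ℝ → ℂ) (B : W.E →L[ℂ] W.E) (hB : IsConvOp W φ B) (a : ℝ) :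
    IsConvOp W (fun y => Complex.exp (-(Complex.I * a * y)) * φ y)
      ((W.Mod (-a)).comp (B.comp (W.Mod a))) := by
  intro f g hg hfg
  have h0 : W.toFun (W.Mod a f) =ᵐ[volume] modFun a g := by
    filter_upwards [W.Mod_spec a f, hfg] with x h1 h2
    rw [h1]; simp [modFun, h2]
  have h1 := hB (W.Mod a f) _ (wh_modFun_test g hg a) h0
  filter_upwards [h1, ae_restrict_of_ae (W.Mod_spec (-a) (B (W.Mod a f)))] with x h2 h3
  simp only [ContinuousLinearMap.comp_apply]
  rw [h3, modFun, h2, ← integral_const_mul]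
  congr 1; ext y
  simp only [modFun]
  have : Complex.exp (-(Complex.I * a * y)) =
      Complex.exp (Complex.I * ((-a : ℝ) : ℂ) * x) * Complex.exp (Complex.I * a * ((x - y : ℝ) : ℂ)) := by
    rw [← Complex.exp_add]; congr 1; push_cast; ring
  rw [this]; ring

theorem wh_avg_cont (W : WHSpace) (B : W.E →L[ℂ] W.E) (f : W.E) :
    Continuous fun a => W.Mod (-a) (B (W.Mod a f)) := by
  obtain ⟨C, hC⟩ := W.Mod_bdd
  have hC0 : 0 ≤ C := (norm_nonneg _).trans (hC 0)
  rw [continuous_iff_continuousAt]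
  intro b
  have hv : Continuous fun a => B (W.Mod a f) := B.continuous.comp (wh_Mod_cont W f)
  have h1 : Tendsto (fun a => W.Mod (-a) (B (W.Mod a f) - B (W.Mod b f))) (𝓝 b) (𝓝 0) := by
    have h2 : Tendsto (fun a => C * ‖B (W.Mod a f) - B (W.Mod b f)‖) (𝓝 b) (𝓝 0) := by
      have := (tendsto_iff_norm_sub_tendsto_zero.1 (hv.tendsto b)).const_mul C
      simpa using this
    exact squeeze_zero_norm (fun a => (W.Mod (-a)).le_of_opNorm_le (hC _) _) h2
  have h3 : Tendsto (fun a => W.Mod (-a) (B (W.Mod b f))) (𝓝 b) (𝓝 (W.Mod (-b) (B (W.Mod b f)))) :=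
    ((wh_Mod_cont W (B (W.Mod b f))).comp continuous_neg).tendsto b
  have h4 := h1.add h3
  rw [zero_add] at h4
  refine h4.congr fun a => ?_
  rw [map_sub, sub_add_cancel]

theorem wh_avg_norm (W : WHSpace) (C : ℝ) (hC : ∀ a, ‖W.Mod a‖ ≤ C) (B : W.E →L[ℂ] W.E) (D : ℝ)
    (hD : ‖B‖ ≤ D) (f : W.E) (a : ℝ) : ‖W.Mod (-a) (B (W.Mod a f))‖ ≤ C * D * C * ‖f‖ := by
  have hC0 : 0 ≤ C := (norm_nonneg _).trans (hC 0)
  have hD0 : 0 ≤ D := (norm_nonneg _).trans hD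
  calc _ ≤ C * ‖B (W.Mod a f)‖ := (W.Mod (-a)).le_of_opNorm_le (hC _) _
    _ ≤ C * (D * ‖W.Mod a f‖) := by gcongr; exact B.le_of_opNorm_le hD _
    _ ≤ C * (D * (C * ‖f‖)) := by gcongr; exact (W.Mod a).le_of_opNorm_le (hC _) _
    _ = _ := by ring

theorem wh_avg_integrable (W : WHSpace) (B : W.E →L[ℂ] W.E) (f : W.E) (k : ℝ → ℂ)
    (hk : Integrable k) (r : ℝ) :
    Integrable fun a => k a • W.Mod (-(r * a)) (B (W.Mod (r * a) f)) := by
  obtain ⟨C, hC⟩ := W.Mod_bdd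
  have hc : Continuous fun a : ℝ => W.Mod (-(r * a)) (B (W.Mod (r * a) f)) :=
    (wh_avg_cont W B f).comp (continuous_const.mul continuous_id)
  refine (hk.norm.mul_const (C * ‖B‖ * C * ‖f‖)).mono'
    (hk.aestronglyMeasurable.smul hc.aestronglyMeasurable) (ae_of_all _ fun a => ?_)
  rw [norm_smul]
  gcongr
  exact wh_avg_norm W C hC B _ le_rfl f _

theorem wh_avg_exists (W : WHSpace) (C : ℝ) (hC : ∀ a, ‖W.Mod a‖ ≤ C)
    (B : W.E →L[ℂ] W.E) (D : ℝ) (hD : ‖B‖ ≤ D) (k : ℝ → ℂ) (hk : Integrable k) (r : ℝ) :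
    ∃ A : W.E →L[ℂ] W.E, (∀ f, A f = ∫ a, k a • W.Mod (-(r * a)) (B (W.Mod (r * a) f))) ∧
      ‖A‖ ≤ (∫ a, ‖k a‖) * (C * D * C) := by
  have hC0 : 0 ≤ C := (norm_nonneg _).trans (hC 0)
  have hD0 : 0 ≤ D := (norm_nonneg _).trans hD
  have hi := fun f => wh_avg_integrable W B f k hk r
  let l : W.E →ₗ[ℂ] W.E :=
    { toFun := fun f => ∫ a, k a • W.Mod (-(r * a)) (B (W.Mod (r * a) f))
      map_add' := by
        intro f g
        rw [← integral_add (hi f) (hi g)]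
        simp
      map_smul' := by
        intro c f
        simp only [map_smul, RingHom.id_apply]
        rw [← integral_smul]
        congr 1; ext x
        rw [smul_comm] }
  have hb : ∀ f, ‖l f‖ ≤ ((∫ a, ‖k a‖) * (C * D * C)) * ‖f‖ := by
    intro f
    change ‖∫ a, k a • W.Mod (-(r * a)) (B (W.Mod (r * a) f))‖ ≤ _
    calc _ ≤ ∫ a, ‖k a‖ * (C * D * C * ‖f‖) := by
          refine norm_integral_le_of_norm_le (hk.norm.mul_const _) (ae_of_all _ fun a => ?_)
          rw [norm_smul]
          gcongr
          exact wh_avg_norm W C hC B D hD f _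
      _ = _ := by rw [integral_mul_const]; ring
  refine ⟨l.mkContinuous _ hb, fun f => rfl, ?_⟩
  refine l.mkContinuous_norm_le ?_ hb
  have : 0 ≤ ∫ a, ‖k a‖ := integral_nonneg fun _ => norm_nonneg _
  positivity

theorem wh_avg_conv (W : WHSpace) (φ : ℝ → ℂ) (hφ : Continuous φ) (B : W.E →L[ℂ] W.E)
    (hB : IsConvOp W φ B) (k : ℝ → ℂ) (hk : Integrable k) (r : ℝ) (χ : ℝ → ℂ)
    (hχ : ∀ y : ℝ, ∫ a : ℝ, k a * Complex.exp (-(Complex.I * (r * a : ℝ) * y)) = χ y)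
    (A : W.E →L[ℂ] W.E)
    (hA : ∀ f, A f = ∫ a, k a • W.Mod (-(r * a)) (B (W.Mod (r * a) f))) :
    IsConvOp W (fun y => χ y * φ y) A := by
  intro f g hg hfg
  have hcg := hg.1.continuous
  rw [hA]
  have hm : ∀ x, Integrable fun y => φ y * g (x - y) := by
    intro x
    refine (hφ.mul (hcg.comp (continuous_const.sub continuous_id))).integrable_of_hasCompactSupport ?_
    refine HasCompactSupport.mul_left ?_
    exact hg.2.1.comp_homeomorph (Homeomorph.subLeft x)
  have h := wh_int_rep W _ (wh_avg_integrable W B f k hk r)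
    (fun a x => k a * ∫ y : ℝ, (Complex.exp (-(Complex.I * (r * a : ℝ) * y)) * φ y) * g (x - y)) ?_ ?_
  · filter_upwards [h] with x hx
    rw [hx]
    have hsw : Integrable (Function.uncurry fun a y : ℝ =>
        k a * ((Complex.exp (-(Complex.I * (r * a : ℝ) * y)) * φ y) * g (x - y))) := by
      have h1 : Integrable (fun p : ℝ × ℝ => k p.1 * (φ p.2 * g (x - p.2))) := hk.mul_prod (hm x)
      have h2 := Integrable.bdd_mul (c := 1) h1
        (f := fun p : ℝ × ℝ => Complex.exp (-(Complex.I * (r * p.1 : ℝ) * p.2))) ?_ ?_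
      · refine h2.congr (ae_of_all _ fun p => ?_)
        simp only [Function.uncurry]; ring
      · exact Continuous.aestronglyMeasurable (by fun_prop)
      · refine ae_of_all _ fun p => ?_
        have : -(Complex.I * (r * p.1 : ℝ) * p.2) = ((-(r * p.1 * p.2) : ℝ) : ℂ) * Complex.I := by
          push_cast; ring
        rw [this, Complex.norm_exp_ofReal_mul_I]
    simp_rw [← integral_const_mul]
    rw [integral_integral_swap hsw]
    congr 1; ext y
    rw [← hχ y, ← integral_mul_const, ← integral_mul_const]
    congr 1; ext a; ring
  · intro a
    have h1 := wh_Mod_conj W φ B hB (r * a) f g hg hfg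
    filter_upwards [h1] with x hx
    simp only [ContinuousLinearMap.comp_apply] at hx
    rw [map_smul, Pi.smul_apply, hx, smul_eq_mul]
  · intro K hK
    have hcont : Continuous fun x => ∫ y, ‖φ y‖ * ‖g (x - y)‖ := by
      have := hg.2.1.norm.continuous_convolution_right (ContinuousLinearMap.mul ℝ ℝ)
        (μ := volume) hφ.norm.locallyIntegrable hcg.norm
      exact this
    have hdom : Integrable (fun p : ℝ × ℝ => ‖k p.1‖ * ∫ y, ‖φ y‖ * ‖g (p.2 - y)‖)
        ((volume : Measure ℝ).prod (volume.restrict K)) :=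
      hk.norm.mul_prod (hcont.continuousOn.integrableOn_compact hK)
    refine hdom.mono' ?_ (ae_of_all _ fun p => ?_)
    · refine (hk.aestronglyMeasurable.comp_fst).mul ?_
      have hs : StronglyMeasurable (Function.uncurry fun (p : ℝ × ℝ) (y : ℝ) =>
          (Complex.exp (-(Complex.I * (r * p.1 : ℝ) * y)) * φ y) * g (p.2 - y)) :=
        Continuous.stronglyMeasurable (by fun_prop)
      exact hs.integral_prod_right.aestronglyMeasurable
    · simp only [Function.uncurry]
      rw [norm_mul]
      gcongr
      refine norm_integral_le_of_norm_le ?_ (ae_of_all _ fun y => ?_)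
      · have := (hm p.2).norm
        simpa only [norm_mul] using this
      · have : -(Complex.I * (r * p.1 : ℝ) * y) = ((-(r * p.1 * y) : ℝ) : ℂ) * Complex.I := by
          push_cast; ring
        rw [norm_mul, norm_mul, this, Complex.norm_exp_ofReal_mul_I, one_mul]

open Complex Filter Topology MeasureTheory

/-- A smooth cutoff which is a Fourier transform of an integrable function. -/
theorem wh_cutoff : ∃ (k χ : ℝ → ℂ), Integrable k ∧ ContDiff ℝ (⊤ : ℕ∞) χ ∧ HasCompactSupport χ ∧
    χ 0 = 1 ∧ ∀ (r y : ℝ),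
      ∫ a : ℝ, k a * Complex.exp (-(Complex.I * (2 * Real.pi * r * a : ℝ) * y)) = χ (r * y) := by
  let b : ContDiffBump (0 : ℝ) := ⟨1, 2, by norm_num, by norm_num⟩
  let χ : ℝ → ℂ := fun x => (b x : ℂ)
  have hχ1 : ContDiff ℝ (⊤ : ℕ∞) χ := Complex.ofRealCLM.contDiff.comp b.contDiff
  have hχ2 : HasCompactSupport χ := b.hasCompactSupport.comp_left (g := fun x : ℝ => (x : ℂ)) (by simp)
  let X : SchwartzMap ℝ ℂ := hχ2.toSchwartzMap hχ1
  let k : SchwartzMap ℝ ℂ := FourierTransformInv.fourierInv X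
  have hk : FourierTransform.fourier (k : ℝ → ℂ) = χ := by
    rw [← SchwartzMap.fourier_coe]
    have : FourierTransform.fourier k = X := FourierTransform.fourier_fourierInv_eq X
    rw [this]; rfl
  refine ⟨k, χ, k.integrable, hχ1, hχ2, ?_, ?_⟩
  · have : b 0 = 1 := b.one_of_mem_closedBall (by simp [b])
    simp [χ, this]
  · intro r y
    rw [← hk, Real.fourier_real_eq_integral_exp_smul]
    congr 1; ext a
    rw [smul_eq_mul, mul_comm]
    congr 2
    push_cast; ring

/-- Approximate identity supported in `(0, 1/(n+1))`. -/
theorem wh_mollifier (n : ℕ) : ∃ θ : ℝ → ℂ, IsTestPlus θ ∧ (∫ y, ‖θ y‖ = 1) ∧ (∫ y, θ y = 1) ∧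
    ∀ y, y ∉ Set.Icc (0 : ℝ) (1 / (n + 1)) → θ y = 0 := by
  set c : ℝ := 1 / (2 * (n + 1)) with hc
  have hc0 : 0 < c := by positivity
  let b : ContDiffBump c := ⟨c / 4, c / 2, by positivity, by linarith⟩
  have hts : tsupport (fun x => ((b.normed volume x : ℝ) : ℂ)) ⊆ Metric.closedBall c (c / 2) := by
    rw [← b.tsupport_normed_eq (μ := volume)]
    exact closure_mono fun x hx h => hx (by simp [h])
  refine ⟨fun x => (b.normed volume x : ℂ), ⟨?_, ?_, ?_⟩, ?_, ?_, ?_⟩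
  · exact Complex.ofRealCLM.contDiff.comp b.contDiff_normed
  · exact (isCompact_closedBall c (c / 2)).of_isClosed_subset isClosed_closure hts
  · refine hts.trans fun x hx => ?_
    rw [Real.closedBall_eq_Icc] at hx
    have := hx.1
    simp only [Set.mem_Ioi]; linarith
  · rw [← b.integral_normed (μ := volume)]
    congr 1; ext y
    rw [Complex.norm_real, Real.norm_of_nonneg (b.nonneg_normed y)]
  · rw [integral_complex_ofReal, b.integral_normed]; simp
  · intro y hy
    refine image_eq_zero_of_notMem_tsupport (f := fun x => ((b.normed volume x : ℝ) : ℂ)) fun h => hy ?_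
    have hx := hts h
    rw [Real.closedBall_eq_Icc] at hx
    have h2 : 1 / ((n : ℝ) + 1) = 2 * c := by rw [hc]; field_simp
    rw [h2]
    exact ⟨by linarith [hx.1], by linarith [hx.2]⟩

theorem wh_S_zero (W : WHSpace) (f : W.E) : W.S 0 f = f := by
  apply W.inj
  filter_upwards [W.S_spec 0 f, W.supp f] with x h1 h2
  rw [h1, transFun]
  split_ifs with h
  · simp
  · rw [h2 (not_le.1 h)]

theorem wh_M_tendsto (W : WHSpace) (θ : ℕ → ℝ → ℂ) (hθ : ∀ n, IsTestPlus (θ n))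
    (h1 : ∀ n, ∫ y, ‖θ n y‖ = 1) (h2 : ∀ n, ∫ y, θ n y = 1)
    (h3 : ∀ n : ℕ, ∀ y, y ∉ Set.Icc (0 : ℝ) (1 / (n + 1)) → θ n y = 0) (f : W.E) :
    Tendsto (fun n => ∫ y, θ n y • W.S y f) atTop (𝓝 f) := by
  rw [Metric.tendsto_atTop]
  intro ε hε
  have hcont := wh_S_cont W 1 f 0 (by simp)
  obtain ⟨δ, hδ, hδf⟩ := Metric.continuousWithinAt_iff.1 hcont (ε / 2) (by positivity)
  rw [wh_S_zero] at hδf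
  obtain ⟨N, hN⟩ := exists_nat_one_div_lt hδ
  refine ⟨N, fun n hn => ?_⟩
  have hi : Integrable (θ n) := (hθ n).1.continuous.integrable_of_hasCompactSupport (hθ n).2.1
  have e : (∫ y, θ n y • W.S y f) - f = ∫ y, θ n y • (W.S y f - f) := by
    simp_rw [smul_sub]
    rw [integral_sub (wh_S_integrable W _ (hθ n) f) (hi.smul_const f), integral_smul_const, h2,
      one_smul]
  rw [dist_eq_norm, e]
  have : ‖∫ y, θ n y • (W.S y f - f)‖ ≤ ∫ y, ‖θ n y‖ * (ε / 2) := by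
    refine norm_integral_le_of_norm_le (hi.norm.mul_const _) (ae_of_all _ fun y => ?_)
    rw [norm_smul]
    by_cases hy : y ∈ Set.Icc (0 : ℝ) (1 / (n + 1))
    · gcongr
      have hn1 : 1 / ((n : ℝ) + 1) ≤ 1 / ((N : ℝ) + 1) := by gcongr
      have hn2 : 1 / ((n : ℝ) + 1) ≤ 1 := by
        rw [div_le_one (by positivity)]; linarith [(Nat.cast_nonneg n : (0 : ℝ) ≤ n)]
      have := hδf (x := y) ⟨hy.1, hy.2.trans hn2⟩ (by
        rw [Real.dist_eq, sub_zero, abs_of_nonneg hy.1]; linarith [hy.2])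
      rw [dist_eq_norm] at this
      exact this.le
    · simp [h3 n y hy]
  rw [integral_mul_const, h1] at this
  linarith

/-- Strong convergence is stable under converging arguments. -/
theorem wh_strong (W : WHSpace) (B : ℕ → W.E →L[ℂ] W.E) (D : ℝ) (hB : ∀ n, ‖B n‖ ≤ D)
    (x : ℕ → W.E) (x₀ y : W.E) (hx : Tendsto x atTop (𝓝 x₀))
    (hy : Tendsto (fun n => B n x₀) atTop (𝓝 y)) : Tendsto (fun n => B n (x n)) atTop (𝓝 y) := by
  have h1 : Tendsto (fun n => B n (x n - x₀)) atTop (𝓝 0) := by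
    have h2 : Tendsto (fun n => D * ‖x n - x₀‖) atTop (𝓝 0) := by
      have := (tendsto_iff_norm_sub_tendsto_zero.1 hx).const_mul D
      simpa using this
    exact squeeze_zero_norm (fun n => (B n).le_of_opNorm_le (hB n) _) h2
  have h4 := h1.add hy
  rw [zero_add] at h4
  refine h4.congr fun a => ?_
  rw [map_sub, sub_add_cancel]

theorem wh_Mod_zero (W : WHSpace) (f : W.E) : W.Mod 0 f = f := by
  apply W.inj
  filter_upwards [W.Mod_spec 0 f] with x h1
  rw [h1, modFun]; simp

/-- Every Wiener-Hopf operator `T` is the strong limit of operators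
`T_{φ_n}` with `φ_n ∈ C_c^∞(ℝ)` and `‖T_{φ_n}‖ ≤ C ‖T‖`, `C` depending only on `E`. -/
theorem wienerHopf_approx (W : WHSpace) :
    ∃ C > 0, ∀ (T : W.E →L[ℂ] W.E), IsWienerHopf W T →
      ∃ (φ : ℕ → ℝ → ℂ) (A : ℕ → W.E →L[ℂ] W.E),
        (∀ n : ℕ, IsTest (φ n) ∧ IsConvOp W (φ n) (A n)) ∧
        (∀ f : W.E, Tendsto (fun n => ‖A n f - T f‖) atTop (nhds 0)) ∧
        ∀ n : ℕ, ‖A n‖ ≤ C * ‖T‖ := by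
  obtain ⟨k, χ, hk, hχ1, hχ2, hχ0, hχ⟩ := wh_cutoff
  obtain ⟨CM, hCM⟩ := W.Mod_bdd
  obtain ⟨CS, hCS⟩ := W.S_bdd (Set.Icc 0 1) isCompact_Icc
  have hCS0 : 0 ≤ CS := (norm_nonneg _).trans (hCS 0 (by simp))
  have hCM0 : 0 ≤ CM := (norm_nonneg _).trans (hCM 0)
  have hk0 : 0 ≤ ∫ a, ‖k a‖ := integral_nonneg fun _ => norm_nonneg _
  refine ⟨(∫ a, ‖k a‖) * (CM * (CS * CS) * CM) + 1, by positivity, ?_⟩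
  intro T hT
  choose θ hθ hθ1 hθ2 hθ3 using wh_mollifier
  choose M hM using fun n => wh_M_exists W (θ n) (hθ n)
  have hMn : ∀ n, ‖M n‖ ≤ CS := by
    intro n
    refine ContinuousLinearMap.opNorm_le_bound _ hCS0 fun f => ?_
    rw [hM]
    have hn2 : 1 / ((n : ℝ) + 1) ≤ 1 := by
      rw [div_le_one (by positivity)]; linarith [(Nat.cast_nonneg n : (0 : ℝ) ≤ n)]
    have := wh_M_bound W (θ n) (hθ n) _ CS (hθ3 n)
      (fun y hy => hCS y ⟨hy.1, hy.2.trans hn2⟩) f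
    rwa [hθ1, mul_one] at this
  have hMt : ∀ f, Tendsto (fun n => M n f) atTop (𝓝 f) := by
    intro f
    simp_rw [hM]
    exact wh_M_tendsto W θ hθ hθ1 hθ2 hθ3 f
  choose φ hφ1 hφ2 using fun n => wh_TMM_conv W T hT (θ n) (hθ n) (M n) (hM n)
  set B : ℕ → W.E →L[ℂ] W.E := fun n => (T.comp (M n)).comp (M n) with hB
  set D : ℝ := ‖T‖ * CS * CS with hD
  have hBn : ∀ n, ‖B n‖ ≤ D := by
    intro n
    calc ‖B n‖ ≤ ‖T.comp (M n)‖ * ‖M n‖ := ContinuousLinearMap.opNorm_comp_le _ _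
      _ ≤ (‖T‖ * ‖M n‖) * ‖M n‖ := by gcongr; exact ContinuousLinearMap.opNorm_comp_le _ _
      _ ≤ D := by rw [hD]; gcongr <;> exact hMn n
  have hBt : ∀ f, Tendsto (fun n => B n f) atTop (𝓝 (T f)) := by
    intro f
    have h1 : Tendsto (fun n => M n (M n f)) atTop (𝓝 f) :=
      wh_strong W M CS hMn _ f f (hMt f) (hMt f)
    exact (T.continuous.tendsto f).comp h1
  let r : ℕ → ℝ := fun n => 1 / ((n : ℝ) + 1)
  have hr : Tendsto r atTop (𝓝 0) := tendsto_one_div_add_atTop_nhds_zero_nat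
  choose A hA hAn using fun n => wh_avg_exists W CM hCM (B n) D (hBn n) k hk (2 * Real.pi * r n)
  refine ⟨fun n y => χ (r n * y) * φ n y, A, ?_, ?_, ?_⟩
  · intro n
    refine ⟨⟨?_, ?_⟩, ?_⟩
    · exact (hχ1.comp (contDiff_const.mul contDiff_id)).mul (hφ1 n)
    · have hrn : r n ≠ 0 := by simp only [r]; positivity
      exact HasCompactSupport.mul_right (hχ2.comp_homeomorph (Homeomorph.mulLeft₀ (r n) hrn))
    · exact wh_avg_conv W (φ n) (hφ1 n).continuous (B n) (hφ2 n) k hk (2 * Real.pi * r n)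
        (fun y => χ (r n * y)) (fun y => hχ (r n) y) (A n) (hA n)
  · intro f
    rw [← tendsto_iff_norm_sub_tendsto_zero]
    have hk1 : ∫ a, k a = 1 := by
      have := hχ 0 0
      simpa [hχ0] using this
    have hlim : ∫ a, k a • T f = T f := by rw [integral_smul_const, hk1, one_smul]
    rw [← hlim]
    simp_rw [hA]
    refine tendsto_integral_of_dominated_convergence (fun a => ‖k a‖ * (CM * D * CM * ‖f‖)) ?_
      (hk.norm.mul_const _) ?_ ?_
    · exact fun n => (wh_avg_integrable W (B n) f k hk (2 * Real.pi * r n)).aestronglyMeasurable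
    · intro n
      refine ae_of_all _ fun a => ?_
      rw [norm_smul]
      gcongr
      exact wh_avg_norm W CM hCM (B n) D (hBn n) f _
    · refine ae_of_all _ fun a => ?_
      refine Tendsto.const_smul ?_ (k a)
      have hs : Tendsto (fun n => 2 * Real.pi * r n * a) atTop (𝓝 0) := by
        have := (hr.const_mul (2 * Real.pi)).mul_const a
        simpa using this
      have hs2 : Tendsto (fun n => -(2 * Real.pi * r n * a)) atTop (𝓝 0) := by
        simpa using hs.neg
      have h1 : Tendsto (fun n => W.Mod (2 * Real.pi * r n * a) f) atTop (𝓝 f) := by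
        have := ((wh_Mod_cont W f).tendsto 0).comp hs
        rwa [wh_Mod_zero] at this
      have h2 := wh_strong W B D hBn _ f (T f) h1 (hBt f)
      refine wh_strong W (fun n => W.Mod (-(2 * Real.pi * r n * a))) CM (fun n => hCM _) _ (T f)
        (T f) h2 ?_
      have := ((wh_Mod_cont W (T f)).tendsto 0).comp hs2
      rwa [wh_Mod_zero] at this
  · intro n
    refine (hAn n).trans ?_
    have : (∫ a, ‖k a‖) * (CM * D * CM) = ((∫ a, ‖k a‖) * (CM * (CS * CS) * CM)) * ‖T‖ := by
      rw [hD]; ring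
    rw [this]
    gcongr
    linarith
end
end

section
/- Let E be a complex Banach space of functions on ℝ⁺ satisfying (H1), (H2), (H3), and let H be a nonzero separable complex Hilbert space. Then the subspace C_c^∞((0,∞)) ⊗ H of finite sums Σ φ_i u_i (φ_i ∈ C_c^∞((0,∞)), u_i ∈ H) is dense in Ē. -/
open Complex Filter Topology

noncomputable section

/-- Elements of the algebraic tensor product `C_c^∞((0,∞)) ⊗ H`: finite sums
`Σ φ_i u_i` with `φ_i ∈ C_c^∞((0,∞))` and `u_i ∈ H`. -/
def IsTestPlusH {H : Type*} [AddCommGroup H] [Module ℂ H] (G : ℝ → H) : Prop :=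
  ∃ (n : ℕ) (φ : Fin n → ℝ → ℂ) (u : Fin n → H),
    (∀ i, IsTestPlus (φ i)) ∧ G = fun x => ∑ i, φ i x • u i

/-- The Banach space `Ē` of (a.e.-equivalence classes of) measurable functions
`F : ℝ⁺ → H` such that `x ↦ ‖F x‖_H` belongs to `E`, with norm
`‖F‖_Ē = ‖ x ↦ ‖F x‖_H ‖_E`, together with the translations `𝐒_a` acting on it. -/
structure WHSpaceH (W : WHSpace) (H : Type)
    [NormedAddCommGroup H] [InnerProductSpace ℂ H] where
  /-- the carrier Banach space -/
  Eb : Type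
  [nacg : NormedAddCommGroup Eb]
  [nsp : NormedSpace ℂ Eb]
  [cpl : CompleteSpace Eb]
  /-- the realization of elements of `Ē` as `H`-valued functions on `ℝ⁺`; two elements
  coincide iff their realizations agree almost everywhere -/
  toFun : Eb →ₗ[ℂ] (ℝ → H)
  inj : ∀ F G : Eb, toFun F =ᵐ[MeasureTheory.volume] toFun G → F = G
  meas : ∀ F : Eb, MeasureTheory.AEStronglyMeasurable (toFun F) MeasureTheory.volume
  supp : ∀ F : Eb, ∀ᵐ x ∂MeasureTheory.volume, x < 0 → toFun F x = 0
  /-- for `F ∈ Ē`, the function `x ↦ ‖F x‖_H` belongs to `E` -/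
  norm_mem : ∀ F : Eb, ∃ e : W.E,
    W.toFun e =ᵐ[MeasureTheory.volume] fun x => (‖toFun F x‖ : ℂ)
  /-- the norm of `Ē`: `‖F‖_Ē = ‖ x ↦ ‖F x‖_H ‖_E` -/
  norm_eq : ∀ (F : Eb) (e : W.E),
    (W.toFun e =ᵐ[MeasureTheory.volume] fun x => (‖toFun F x‖ : ℂ)) → ‖F‖ = ‖e‖
  /-- `Ē` consists of all measurable `G : ℝ⁺ → H` with `(x ↦ ‖G x‖_H) ∈ E` -/
  mem_of_norm : ∀ G : ℝ → H, MeasureTheory.AEStronglyMeasurable G MeasureTheory.volume →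
    (∀ᵐ x ∂MeasureTheory.volume, x < 0 → G x = 0) →
    (∃ e : W.E, W.toFun e =ᵐ[MeasureTheory.volume] fun x => (‖G x‖ : ℂ)) →
    ∃ F : Eb, toFun F =ᵐ[MeasureTheory.volume] G
  /-- `C_c^∞((0,∞)) ⊗ H ⊆ Ē` -/
  tensor_mem : ∀ G : ℝ → H, IsTestPlusH G → ∃ F : Eb, toFun F =ᵐ[MeasureTheory.volume] G
  /-- the translations `𝐒_a`, `a ∈ ℝ`, act boundedly on `Ē` -/
  SH : ℝ → Eb →L[ℂ] Eb
  SH_spec : ∀ (a : ℝ) (F : Eb),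
    toFun (SH a F) =ᵐ[MeasureTheory.volume] transFun a (toFun F)

attribute [instance] WHSpaceH.nacg WHSpaceH.nsp WHSpaceH.cpl

open MeasureTheory

/-- A Wiener-Hopf operator on `Ē`: a bounded operator `𝐓` with `𝐒_{-a} 𝐓 𝐒_a = 𝐓`
for all `a ≥ 0`. -/
def IsWienerHopfH {W : WHSpace} {H : Type} [NormedAddCommGroup H] [InnerProductSpace ℂ H]
    (V : WHSpaceH W H) (T : V.Eb →L[ℂ] V.Eb) : Prop :=
  ∀ a : ℝ, 0 ≤ a → (V.SH (-a)).comp (T.comp (V.SH a)) = T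

theorem isTestPlus_sub {g g' : ℝ → ℂ} (h : IsTestPlus g) (h' : IsTestPlus g') :
    IsTestPlus (g - g') := by
  have hs : tsupport (g - g') ⊆ tsupport g ∪ tsupport g' := tsupport_sub g g'
  refine ⟨h.1.sub h'.1, ?_, hs.trans (Set.union_subset h.2.2 h'.2.2)⟩
  exact (h.2.1.isCompact.union h'.2.1.isCompact).of_isClosed_subset (isClosed_tsupport _) hs

theorem iteratedDeriv_zero_off {g : ℝ → ℂ} {x : ℝ} (k : ℕ) (hx : x ∉ tsupport g) :
    iteratedDeriv k g x = 0 := by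
  have h : x ∉ Function.support (iteratedFDeriv ℝ k g) :=
    fun h => hx (support_iteratedFDeriv_subset k h)
  rw [Function.notMem_support] at h
  rw [iteratedDeriv_eq_iteratedFDeriv, h]; rfl

structure TestOn (K : Set ℝ) where
  /-- the function -/
  val : ℝ → ℂ
  property : IsTestPlus val ∧ tsupport val ⊆ K

theorem sep_piece (W : WHSpace) (K : Set ℝ) (hK : IsCompact K) :
    TopologicalSpace.IsSeparable {f : W.E | ∃ g : ℝ → ℂ, (IsTestPlus g ∧ tsupport g ⊆ K) ∧
      W.toFun f =ᵐ[volume] g} := by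
  obtain ⟨C, hC, N, hCN⟩ := W.test_cont K hK
  have : CompactSpace K := isCompact_iff_compactSpace.1 hK
  have hcont : ∀ (g : TestOn K) (k : ℕ), Continuous (iteratedDeriv k g.val) := fun g k =>
    g.property.1.1.continuous_iteratedDeriv k (by exact_mod_cast le_top)
  let ι : TestOn K → (Fin (N + 1) → C(K, ℂ)) := fun g k =>
    ⟨fun x => iteratedDeriv k g.val x, (hcont g k).comp continuous_subtype_val⟩
  let : PseudoMetricSpace (TestOn K) := PseudoMetricSpace.induced ι inferInstance
  have : SecondCountableTopology (TestOn K) := by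
    have : Topology.IsInducing ι := ⟨rfl⟩
    exact this.secondCountableTopology
  choose J hJ using fun g : TestOn K => W.test_mem g.val g.property.1
  have hLip : LipschitzWith (Real.toNNReal (C * (N + 1))) J := by
    refine LipschitzWith.of_dist_le_mul fun g g' => ?_
    have h0 : 0 ≤ C * ((N : ℝ) + 1) := by positivity
    rw [Real.coe_toNNReal _ h0, dist_eq_norm]
    have hs : tsupport (g.val - g'.val) ⊆ K :=
      (tsupport_sub g.val g'.val).trans (Set.union_subset g.property.2 g'.property.2)
    have hd : ∀ k ∈ Finset.range (N + 1),
        (⨆ x : ℝ, ‖iteratedDeriv k (g.val - g'.val) x‖) ≤ dist g g' := by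
      intro k hk
      refine ciSup_le fun x => ?_
      by_cases hx : x ∈ K
      · have hg : ContDiff ℝ k g.val := g.property.1.1.of_le (by exact_mod_cast le_top)
        have hg' : ContDiff ℝ k g'.val := g'.property.1.1.of_le (by exact_mod_cast le_top)
        rw [iteratedDeriv_sub hg.contDiffAt hg'.contDiffAt, ← dist_eq_norm]
        have h1 := ContinuousMap.dist_apply_le_dist (f := ι g ⟨k, Finset.mem_range.1 hk⟩)
          (g := ι g' ⟨k, Finset.mem_range.1 hk⟩) ⟨x, hx⟩
        exact h1.trans (dist_le_pi_dist (ι g) (ι g') _)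
      · rw [iteratedDeriv_zero_off k (fun h => hx (hs h)), norm_zero]
        exact dist_nonneg
    refine (hCN (J g - J g') (g.val - g'.val) (isTestPlus_sub g.property.1 g'.property.1) hs ?_).trans ?_
    · rw [map_sub]
      exact (hJ g).sub (hJ g')
    · rw [mul_assoc]
      gcongr
      refine (Finset.sum_le_card_nsmul _ _ _ hd).trans ?_
      simp
  refine (TopologicalSpace.isSeparable_range hLip.continuous).mono ?_
  rintro f ⟨g, hg, hf⟩
  exact ⟨⟨g, hg⟩, W.inj _ _ ((hJ ⟨g, hg⟩).trans hf.symm)⟩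

theorem sep_E (W : WHSpace) : TopologicalSpace.SeparableSpace W.E := by
  have h : TopologicalSpace.IsSeparable {f : W.E | ∃ g : ℝ → ℂ, IsTestPlus g ∧
      W.toFun f =ᵐ[volume] g} := by
    refine (TopologicalSpace.IsSeparable.iUnion fun n : ℕ =>
      sep_piece W (Metric.closedBall 0 n) (isCompact_closedBall _ _)).mono ?_
    rintro f ⟨g, hg, hf⟩
    obtain ⟨r, hr⟩ := hg.2.1.isCompact.isBounded.subset_closedBall 0
    obtain ⟨n, hn⟩ := exists_nat_ge r
    exact Set.mem_iUnion.2 ⟨n, g, ⟨hg, hr.trans (Metric.closedBall_subset_closedBall hn)⟩, hf⟩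
  have h2 := h.closure
  rw [W.test_dense.closure_eq] at h2
  exact TopologicalSpace.isSeparable_univ_iff.1 h2

section Solid

variable {W : WHSpace} {H : Type} [NormedAddCommGroup H] [InnerProductSpace ℂ H]

/-- elements with a.e. equal pointwise norms -/
theorem exists_of_norm_eq (V : WHSpaceH W H) (F : V.Eb) (G : ℝ → H)
    (hG : AEStronglyMeasurable G volume) (h : ∀ᵐ x, ‖G x‖ = ‖V.toFun F x‖) :
    ∃ F' : V.Eb, V.toFun F' =ᵐ[volume] G ∧ ‖F'‖ = ‖F‖ := by
  obtain ⟨e, he⟩ := V.norm_mem F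
  have heG : W.toFun e =ᵐ[volume] fun x => (‖G x‖ : ℂ) := by
    filter_upwards [he, h] with x h1 h2
    rw [h1, h2]
  obtain ⟨F', hF'⟩ := V.mem_of_norm G hG (by
    filter_upwards [V.supp F, h] with x h1 h2 hx
    rw [h1 hx, norm_zero, norm_eq_zero] at h2
    exact h2) ⟨e, heG⟩
  refine ⟨F', hF', ?_⟩
  rw [V.norm_eq F e he]
  apply V.norm_eq
  filter_upwards [heG, hF'] with x h1 h2
  rw [h1, h2]

theorem exists_real_mul (V : WHSpaceH W H) (F : V.Eb) (h : ℝ → ℝ)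
    (hh : AEStronglyMeasurable h volume) (hb : ∀ x, |h x| ≤ 1) :
    ∃ F' : V.Eb, V.toFun F' =ᵐ[volume] (fun x => (h x : ℂ) • V.toFun F x) ∧ ‖F'‖ ≤ ‖F‖ := by
  have hs : AEStronglyMeasurable (fun x => Real.sqrt (1 - h x ^ 2)) volume :=
    (Real.continuous_sqrt.comp (continuous_const.sub (continuous_id.pow 2))).comp_aestronglyMeasurable hh
  have hc := Complex.continuous_ofReal.comp_aestronglyMeasurable hh
  have hsc := (Complex.continuous_ofReal.comp_aestronglyMeasurable hs)
  have hsq : ∀ x, Real.sqrt (1 - h x ^ 2) ^ 2 = 1 - h x ^ 2 := fun x =>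
    Real.sq_sqrt (by have := (sq_le_one_iff_abs_le_one (h x)).2 (hb x); linarith)
  have hn : ∀ (ε : ℝ), ε ^ 2 = 1 → ∀ x,
      ‖(h x : ℂ) + ((ε * Real.sqrt (1 - h x ^ 2) : ℝ) : ℂ) * Complex.I‖ = 1 := by
    intro ε hε x
    rw [Complex.norm_add_mul_I, mul_pow, hε, hsq, Real.sqrt_eq_one]
    ring
  have key : ∀ (ε : ℝ), ε ^ 2 = 1 → ∃ F' : V.Eb, V.toFun F' =ᵐ[volume]
      (fun x => ((h x : ℂ) + ((ε * Real.sqrt (1 - h x ^ 2) : ℝ) : ℂ) * Complex.I) • V.toFun F x)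
      ∧ ‖F'‖ = ‖F‖ := by
    intro ε hε
    apply exists_of_norm_eq
    · refine AEStronglyMeasurable.smul ?_ (V.meas F)
      refine hc.add (AEStronglyMeasurable.mul_const ?_ _)
      exact Complex.continuous_ofReal.comp_aestronglyMeasurable (hs.const_mul ε)
    · filter_upwards with x
      rw [norm_smul, hn ε hε x, one_mul]
  obtain ⟨F1, h1, n1⟩ := key 1 (by norm_num)
  obtain ⟨F2, h2, n2⟩ := key (-1) (by norm_num)
  refine ⟨(1 / 2 : ℂ) • (F1 + F2), ?_, ?_⟩
  · rw [map_smul, map_add]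
    filter_upwards [h1, h2] with x e1 e2
    simp only [Pi.smul_apply, Pi.add_apply, e1, e2]
    rw [← add_smul, smul_smul]
    congr 1
    push_cast
    ring
  · rw [norm_smul]
    have := norm_add_le F1 F2
    rw [n1, n2] at this
    norm_num
    linarith

theorem exists_of_norm_le (V : WHSpaceH W H) (F : V.Eb) (G : ℝ → H)
    (hG : AEStronglyMeasurable G volume) (h : ∀ᵐ x, ‖G x‖ ≤ ‖V.toFun F x‖) :
    ∃ F' : V.Eb, V.toFun F' =ᵐ[volume] G ∧ ‖F'‖ ≤ ‖F‖ := by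
  obtain ⟨F1, h1, n1⟩ := exists_real_mul V F
    (fun x => min 1 (‖G x‖ / ‖V.toFun F x‖))
    (by
      refine AEMeasurable.aestronglyMeasurable ?_
      exact aemeasurable_const.min (hG.norm.aemeasurable.div (V.meas F).norm.aemeasurable))
    (by
      intro x
      rw [abs_of_nonneg (by positivity)]
      exact min_le_left _ _)
  obtain ⟨F2, h2, n2⟩ := exists_of_norm_eq V F1 G hG (by
    filter_upwards [h, h1] with x hx e1
    rw [e1, norm_smul, Complex.norm_real, Real.norm_of_nonneg (by positivity)]
    rcases eq_or_lt_of_le (norm_nonneg (V.toFun F x)) with h0 | h0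
    · rw [← h0] at hx ⊢
      simpa using hx
    · rw [min_eq_right ((div_le_one h0).2 hx)]
      field_simp)
  exact ⟨F2, h2, n2.trans_le n1⟩

theorem norm_le_of_ae (V : WHSpaceH W H) (F G : V.Eb)
    (h : ∀ᵐ x, ‖V.toFun G x‖ ≤ ‖V.toFun F x‖) : ‖G‖ ≤ ‖F‖ := by
  obtain ⟨F', h1, h2⟩ := exists_of_norm_le V F (V.toFun G) (V.meas G) h
  rwa [V.inj _ _ h1] at h2

theorem exists_indicator (V : WHSpaceH W H) (F : V.Eb) (A : Set ℝ) (hA : MeasurableSet A) :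
    ∃ F' : V.Eb, V.toFun F' =ᵐ[volume] A.indicator (V.toFun F) := by
  obtain ⟨F', h1, -⟩ := exists_of_norm_le V F (A.indicator (V.toFun F))
    ((V.meas F).indicator hA) (by filter_upwards with x using norm_indicator_le_norm_self _ _)
  exact ⟨F', h1⟩

theorem no_disjoint (V : WHSpaceH W H) (F : V.Eb) (B : ℕ → Set ℝ) (hB : ∀ k, MeasurableSet (B k))
    (hd : Pairwise fun i j => Disjoint (B i) (B j)) (δ : ℝ) (hδ : 0 < δ)
    (h : ∀ k, ∀ F' : V.Eb, V.toFun F' =ᵐ[volume] (B k).indicator (V.toFun F) → δ ≤ ‖F'‖) :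
    False := by
  have := sep_E W
  obtain ⟨q, hq⟩ := exists_surjective_nat ℚ
  let C : ℝ → Set ℝ := fun t => ⋃ k ∈ {k : ℕ | (q k : ℝ) < t}, B k
  have hC : ∀ t, MeasurableSet (C t) := fun t =>
    MeasurableSet.biUnion (Set.to_countable _) fun k _ => hB k
  choose Φ hΦ using fun t => exists_indicator V F (C t) (hC t)
  choose e he using fun t => V.norm_mem (Φ t)
  have hlt : ∀ s t : ℝ, s < t → δ ≤ dist (e s) (e t) := by
    intro s t hst
    obtain ⟨r, hr1, hr2⟩ := exists_rat_btwn hst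
    obtain ⟨k, rfl⟩ := hq r
    obtain ⟨P, hP⟩ := exists_indicator V F (C t \ C s) ((hC t).diff (hC s))
    obtain ⟨Q, hQ⟩ := exists_indicator V F (B k) (hB k)
    have hsub : C s ⊆ C t := by
      intro x hx
      simp only [C, Set.mem_iUnion, Set.mem_ofPred_eq] at hx ⊢
      obtain ⟨j, hj, hx⟩ := hx
      exact ⟨j, hj.trans hst, hx⟩
    have hBk : B k ⊆ C t \ C s := by
      intro x hx
      refine ⟨?_, ?_⟩
      · simp only [C, Set.mem_iUnion, Set.mem_ofPred_eq]
        exact ⟨k, hr2, hx⟩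
      · simp only [C, Set.mem_iUnion, Set.mem_ofPred_eq, not_exists]
        intro j hj hxj
        have hjk : j ≠ k := by
          rintro rfl
          exact lt_asymm hj hr1
        exact Set.disjoint_left.1 (hd hjk) hxj hx
    have h1 : ‖P‖ = ‖e t - e s‖ := by
      apply V.norm_eq
      rw [map_sub]
      filter_upwards [he s, he t, hΦ s, hΦ t, hP] with x a1 a2 a3 a4 a5
      rw [Pi.sub_apply, a1, a2, a3, a4, a5]
      by_cases hx : x ∈ C s
      · simp [hx, hsub hx]
      · by_cases hx' : x ∈ C t <;> simp [hx, hx']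
    rw [dist_comm, dist_eq_norm, ← h1]
    refine (h k Q hQ).trans (norm_le_of_ae V P Q ?_)
    filter_upwards [hP, hQ] with x a1 a2
    rw [a1, a2]
    exact norm_indicator_le_of_subset hBk _ _
  have hpw : Pairwise fun s t : ℝ => Disjoint (Metric.ball (e s) (δ / 2)) (Metric.ball (e t) (δ / 2)) := by
    intro s t hst
    apply Metric.ball_disjoint_ball
    rw [add_halves]
    rcases lt_or_gt_of_ne hst with h | h
    · exact hlt s t h
    · rw [dist_comm]; exact hlt t s h
  have := Pairwise.countable_of_isOpen_disjoint hpw (fun _ => Metric.isOpen_ball)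
    (fun s => ⟨e s, Metric.mem_ball_self (by positivity)⟩)
  exact not_countable this

/-- order continuity along decreasing sets -/
theorem tendsto_indicator (V : WHSpaceH W H) (F : V.Eb) (A : ℕ → Set ℝ)
    (hA : ∀ k, MeasurableSet (A k)) (hanti : Antitone A)
    (h0 : ∀ᵐ x, V.toFun F x ≠ 0 → ∃ n, x ∉ A n) (Φ : ℕ → V.Eb)
    (hΦ : ∀ n, V.toFun (Φ n) =ᵐ[volume] (A n).indicator (V.toFun F)) :
    Tendsto Φ atTop (𝓝 0) := by
  have hcau : CauchySeq Φ := by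
    by_contra hc
    rw [Metric.cauchySeq_iff'] at hc
    push Not at hc
    obtain ⟨δ, hδ, hc⟩ := hc
    choose nx hnx hdist using hc
    let m : ℕ → ℕ := fun k => nx^[k] 0
    have hm : ∀ k, m (k + 1) = nx (m k) := fun k => Function.iterate_succ_apply' nx k 0
    have hmono : Monotone m := monotone_nat_of_le_succ fun k => by rw [hm]; exact hnx _
    refine no_disjoint V F (fun k => A (m k) \ A (m (k + 1)))
      (fun k => (hA _).diff (hA _)) ?_ δ hδ ?_
    · have : ∀ i j, i < j → Disjoint (A (m i) \ A (m (i + 1))) (A (m j) \ A (m (j + 1))) := by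
        intro i j hij
        rw [Set.disjoint_left]
        intro x hx hx'
        exact hx.2 (hanti (hmono hij) hx'.1)
      intro i j hij
      rcases lt_or_gt_of_ne hij with h | h
      · exact this i j h
      · exact (this j i h).symm
    · intro k F' hF'
      have h1 := hdist (m k)
      rw [← hm, dist_comm, dist_eq_norm] at h1
      rwa [← V.inj (Φ (m k) - Φ (m (k + 1))) F' ?_]
      rw [map_sub]
      filter_upwards [hΦ (m k), hΦ (m (k + 1)), hF'] with x a1 a2 a3
      rw [Pi.sub_apply, a1, a2, a3]
      have hsub : A (m (k + 1)) ⊆ A (m k) := hanti (hmono k.le_succ)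
      by_cases hx : x ∈ A (m (k + 1))
      · simp [hx, hsub hx]
      · by_cases hx' : x ∈ A (m k) <;> simp [hx, hx']
  obtain ⟨G, hG⟩ := cauchySeq_tendsto_of_complete hcau
  have hz : ∀ m, ∀ᵐ x, (x ∉ A m) → V.toFun G x = 0 := by
    intro m
    obtain ⟨G', hG'⟩ := exists_indicator V G (A m)ᶜ (hA m).compl
    have hle : ∀ n ≥ m, ‖G'‖ ≤ ‖Φ n - G‖ := by
      intro n hn
      apply norm_le_of_ae
      rw [map_sub]
      filter_upwards [hG', hΦ n] with x a1 a2
      rw [Pi.sub_apply, a1, a2]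
      by_cases hx : x ∈ A m
      · simp [hx]
      · have : x ∉ A n := fun h => hx (hanti hn h)
        simp [hx, this]
    have h2 : ‖G'‖ ≤ 0 := by
      refine ge_of_tendsto (tendsto_iff_norm_sub_tendsto_zero.1 hG) ?_
      filter_upwards [eventually_ge_atTop m] with n hn using hle n hn
    have h3 : G' = 0 := norm_le_zero_iff.1 h2
    rw [h3, map_zero] at hG'
    filter_upwards [hG'] with x a hx
    simpa [hx] using a.symm
  have hall : ∀ᵐ x, ∀ m, (x ∉ A m) → V.toFun G x = 0 := ae_all_iff.2 hz
  have hrest : ∀ᵐ x, V.toFun F x = 0 → V.toFun G x = 0 := by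
    let S : Set ℝ := {x | (V.meas F).mk _ x = 0}
    have hS : MeasurableSet S :=
      (V.meas F).stronglyMeasurable_mk.measurableSet_eq_fun stronglyMeasurable_const
    obtain ⟨G', hG'⟩ := exists_indicator V G S hS
    have hle : ∀ n, ‖G'‖ ≤ ‖Φ n - G‖ := by
      intro n
      apply norm_le_of_ae
      rw [map_sub]
      filter_upwards [hG', hΦ n, (V.meas F).ae_eq_mk] with x a1 a2 a3
      rw [Pi.sub_apply, a1, a2]
      by_cases hx : x ∈ S
      · have h4 : V.toFun F x = 0 := by rw [a3]; exact hx
        have h5 : (A n).indicator (V.toFun F) x = 0 := by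
          by_cases hxa : x ∈ A n <;> simp [hxa, h4]
        simp [hx, h5]
      · simp [hx]
    have h2 : ‖G'‖ ≤ 0 :=
      ge_of_tendsto (tendsto_iff_norm_sub_tendsto_zero.1 hG) (Eventually.of_forall hle)
    have h3 : G' = 0 := norm_le_zero_iff.1 h2
    rw [h3, map_zero] at hG'
    filter_upwards [hG', (V.meas F).ae_eq_mk] with x a a3 hx
    have : x ∈ S := by rw [a3] at hx; exact hx
    simpa [this] using a.symm
  have hG0 : G = 0 := by
    apply V.inj
    rw [map_zero]
    filter_upwards [hall, hrest, h0] with x a1 a2 a3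
    by_cases hx : V.toFun F x = 0
    · exact a2 hx
    · obtain ⟨n, hn⟩ := a3 hx
      exact a1 n hn
  rwa [hG0] at hG

end Solid

section Dense

variable {W : WHSpace} {H : Type} [NormedAddCommGroup H] [InnerProductSpace ℂ H]

theorem dom_conv_zero (V : WHSpaceH W H) (D : V.Eb) (G : ℕ → V.Eb)
    (hle : ∀ n, ∀ᵐ x, ‖V.toFun (G n) x‖ ≤ ‖V.toFun D x‖)
    (hlim : ∀ᵐ x, Tendsto (fun n => V.toFun (G n) x) atTop (𝓝 0)) :
    Tendsto G atTop (𝓝 0) := by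
  have key : ∀ η : ℝ, 0 < η → ∃ Φ : ℕ → V.Eb, Tendsto Φ atTop (𝓝 0) ∧
      ∀ n, ‖G n‖ ≤ ‖Φ n‖ + η * ‖D‖ := by
    intro η hη
    let d := (V.meas D).mk _
    let g := fun n => (V.meas (G n)).mk _
    have hd : StronglyMeasurable d := (V.meas D).stronglyMeasurable_mk
    have hg : ∀ n, StronglyMeasurable (g n) := fun n => (V.meas (G n)).stronglyMeasurable_mk
    have hde : V.toFun D =ᵐ[volume] d := (V.meas D).ae_eq_mk
    have hge : ∀ n, V.toFun (G n) =ᵐ[volume] g n := fun n => (V.meas (G n)).ae_eq_mk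
    have hgall : ∀ᵐ x, ∀ n, V.toFun (G n) x = g n x := ae_all_iff.2 hge
    let A : ℕ → Set ℝ := fun n => ⋃ j ∈ {j : ℕ | n ≤ j}, {x | η * ‖d x‖ < ‖g j x‖}
    have hA : ∀ n, MeasurableSet (A n) := fun n =>
      MeasurableSet.biUnion (Set.to_countable _) fun j _ =>
        measurableSet_lt (hd.norm.measurable.const_mul η) (hg j).norm.measurable
    have hanti : Antitone A := fun n m hnm =>
      Set.biUnion_subset_biUnion_left fun j (hj : m ≤ j) => (hnm.trans hj : n ≤ j)
    choose Φ hΦ using fun n => exists_indicator V D (A n) (hA n)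
    refine ⟨Φ, tendsto_indicator V D A hA hanti ?_ Φ hΦ, ?_⟩
    · filter_upwards [hlim, hde, hgall] with x h1 h2 h3 h4
      have h5 : ∀ᶠ n in atTop, ‖V.toFun (G n) x‖ < η * ‖V.toFun D x‖ :=
        (tendsto_zero_iff_norm_tendsto_zero.1 h1).eventually_lt_const
          (mul_pos hη (norm_pos_iff.2 h4))
      obtain ⟨n, hn⟩ := eventually_atTop.1 h5
      refine ⟨n, ?_⟩
      simp only [A, Set.mem_iUnion, not_exists]
      intro j hj hx
      have h6 := hn j hj
      rw [h2, h3] at h6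
      exact lt_asymm h6 hx
    · intro n
      obtain ⟨P, hP⟩ := exists_indicator V (G n) (A n) (hA n)
      obtain ⟨Q, hQ⟩ := exists_indicator V (G n) (A n)ᶜ (hA n).compl
      have h1 : G n = P + Q := by
        apply V.inj
        rw [map_add]
        filter_upwards [hP, hQ] with x a1 a2
        rw [Pi.add_apply, a1, a2, Set.indicator_self_add_compl_apply]
      have h2 : ‖P‖ ≤ ‖Φ n‖ := by
        apply norm_le_of_ae
        filter_upwards [hP, hΦ n, hle n] with x a1 a2 a3
        rw [a1, a2]
        by_cases hx : x ∈ A n <;> simp [hx, a3]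
      have h3 : ‖Q‖ ≤ ‖((η : ℝ) : ℂ) • D‖ := by
        apply norm_le_of_ae
        rw [map_smul]
        filter_upwards [hQ, hde, hge n] with x a1 a2 a3
        rw [a1, Pi.smul_apply, norm_smul, Complex.norm_real, Real.norm_of_nonneg hη.le]
        by_cases hx : x ∈ A n
        · simp only [Set.mem_compl_iff, hx, not_true_eq_false, not_false_eq_true,
            Set.indicator_of_notMem, norm_zero]
          positivity
        · have h6 : ‖g n x‖ ≤ η * ‖d x‖ := by
            by_contra h
            push Not at h
            apply hx
            simp only [A, Set.mem_iUnion]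
            exact ⟨n, le_refl n, h⟩
          rw [a2, Set.indicator_of_mem (by exact hx), a3]
          exact h6
      rw [norm_smul, Complex.norm_real, Real.norm_of_nonneg hη.le] at h3
      rw [h1]
      exact (norm_add_le _ _).trans (add_le_add h2 h3)
  rw [tendsto_zero_iff_norm_tendsto_zero, Metric.tendsto_atTop]
  intro ε hε
  have hD : 0 < ‖D‖ + 1 := by positivity
  obtain ⟨Φ, h1, h2⟩ := key (ε / 2 / (‖D‖ + 1)) (by positivity)
  have h3 := (tendsto_zero_iff_norm_tendsto_zero.1 h1).eventually_lt_const (half_pos hε)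
  obtain ⟨n, hn⟩ := eventually_atTop.1 h3
  refine ⟨n, fun m hm => ?_⟩
  rw [Real.dist_eq, sub_zero, abs_of_nonneg (norm_nonneg _)]
  have h4 : ε / 2 / (‖D‖ + 1) * ‖D‖ ≤ ε / 2 := by
    rw [div_mul_eq_mul_div, div_le_iff₀ hD]
    nlinarith
  linarith [h2 m, hn m hm]

theorem dom_conv (V : WHSpaceH W H) (D F : V.Eb) (G : ℕ → V.Eb)
    (hle : ∀ n, ∀ᵐ x, ‖V.toFun (G n) x - V.toFun F x‖ ≤ ‖V.toFun D x‖)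
    (hlim : ∀ᵐ x, Tendsto (fun n => V.toFun (G n) x) atTop (𝓝 (V.toFun F x))) :
    Tendsto G atTop (𝓝 F) := by
  rw [← tendsto_sub_nhds_zero_iff]
  refine dom_conv_zero V D _ ?_ ?_
  · intro n
    rw [map_sub]
    exact hle n
  · filter_upwards [hlim] with x hx
    simp only [map_sub, Pi.sub_apply]
    exact tendsto_sub_nhds_zero_iff.2 hx

theorem isTestPlusH_add {G G' : ℝ → H} (h : IsTestPlusH G) (h' : IsTestPlusH G') :
    IsTestPlusH (G + G') := by
  obtain ⟨n, φ, u, hφ, rfl⟩ := h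
  obtain ⟨m, ψ, v, hψ, rfl⟩ := h'
  refine ⟨n + m, Fin.append φ ψ, Fin.append u v, ?_, ?_⟩
  · intro i
    refine Fin.addCases (fun i => ?_) (fun i => ?_) i
    · simpa using hφ i
    · simpa using hψ i
  · funext x
    simp [Fin.sum_univ_add]

theorem isTestPlusH_single {φ : ℝ → ℂ} (h : IsTestPlus φ) (u : H) :
    IsTestPlusH (fun x => φ x • u) :=
  ⟨1, fun _ => φ, fun _ => u, fun _ => h, by simp⟩

/-- the tensor products as an additive submonoid -/
def tens (V : WHSpaceH W H) : AddSubmonoid V.Eb where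
  carrier := {F : V.Eb | ∃ G : ℝ → H, IsTestPlusH G ∧ V.toFun F =ᵐ[volume] G}
  zero_mem' := ⟨0, ⟨0, fun _ => 0, fun _ => 0, fun i => i.elim0, by funext x; simp⟩, by
    rw [map_zero]⟩
  add_mem' := by
    rintro F F' ⟨G, hG, h⟩ ⟨G', hG', h'⟩
    refine ⟨G + G', isTestPlusH_add hG hG', ?_⟩
    rw [map_add]
    exact h.add h'

theorem bump_test (c : ℝ) (f : ContDiffBump c) (hf : f.rOut < c) :
    IsTestPlus (fun x => (f x : ℂ)) := by
  have hs : tsupport (fun x => (f x : ℂ)) ⊆ Metric.closedBall c f.rOut := by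
    rw [← f.tsupport_eq]
    exact closure_mono fun x hx => by
      simpa using hx
  refine ⟨Complex.ofRealCLM.contDiff.comp f.contDiff, ?_, ?_⟩
  · exact (isCompact_closedBall _ _).of_isClosed_subset (isClosed_tsupport _) hs
  · intro x hx
    have := hs hx
    rw [Metric.mem_closedBall, Real.dist_eq, abs_le] at this
    exact Set.mem_Ioi.2 (by linarith [this.1])

/-- approximation of indicators by test functions -/
theorem exists_approx_ind (a b : ℝ) (ha : 0 < a) (A : Set ℝ) (hA : MeasurableSet A)
    (hAs : A ⊆ Set.Icc a b) :
    ∃ g : ℕ → ℝ → ℝ, (∀ n, IsTestPlus (fun x => (g n x : ℂ))) ∧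
      (∀ n x, 0 ≤ g n x ∧ g n x ≤ 1) ∧
      (∀ n x, x ∉ Set.Icc (a - a / 4) (b + a / 4) → g n x = 0) ∧
      ∀ᵐ x, Tendsto (fun n => g n x) atTop (𝓝 (A.indicator (fun _ => (1 : ℝ)) x)) := by
  let φ : ℕ → ContDiffBump (0 : ℝ) := fun n =>
    ⟨a / 8 / (n + 1), a / 4 / (n + 1), by positivity, by gcongr; norm_num⟩
  let χ : ℝ → ℝ := A.indicator (fun _ => (1 : ℝ))
  have hχ : Integrable χ volume := by
    refine IntegrableOn.integrable_indicator ?_ hA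
    exact (integrableOn_const (by simp) (by simp)).mono_set hAs
  have hrout : ∀ n, (φ n).rOut ≤ a / 4 := fun n =>
    div_le_self (by positivity) (by have : (0:ℝ) ≤ n := n.cast_nonneg; linarith)
  let g : ℕ → ℝ → ℝ := fun n =>
    MeasureTheory.convolution ((φ n).normed volume) χ (ContinuousLinearMap.lsmul ℝ ℝ) volume
  have hsupp : ∀ n x, x ∉ Set.Icc (a - a / 4) (b + a / 4) → g n x = 0 := by
    intro n x hx
    by_contra h
    obtain ⟨y, hy, z, hz, rfl⟩ := support_convolution_subset (ContinuousLinearMap.lsmul ℝ ℝ) h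
    rw [(φ n).support_normed_eq, Metric.mem_ball, Real.dist_eq, sub_zero, abs_lt] at hy
    have hz' : z ∈ A := Set.support_indicator_subset hz
    have := hAs hz'
    have := hrout n
    exact hx ⟨by linarith [this, (hAs hz').1, hy.1], by linarith [this, (hAs hz').2, hy.2]⟩
  have hts : ∀ n, tsupport (fun x => (g n x : ℂ)) ⊆ Set.Icc (a - a / 4) (b + a / 4) := by
    intro n
    refine closure_minimal (fun x hx => ?_) isClosed_Icc
    by_contra h
    exact hx (by simp [hsupp n x h])
  have hcd : ∀ n, ContDiff ℝ (⊤ : ℕ∞) (g n) := fun n =>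
    (φ n).hasCompactSupport_normed.contDiff_convolution_left _ (φ n).contDiff_normed
      hχ.locallyIntegrable
  have hχb : ∀ x, 0 ≤ χ x ∧ χ x ≤ 1 := by
    intro x
    by_cases hx : x ∈ A <;> simp [χ, hx]
  refine ⟨g, fun n => ⟨Complex.ofRealCLM.contDiff.comp (hcd n), ?_, ?_⟩, ?_, hsupp, ?_⟩
  · exact isCompact_Icc.of_isClosed_subset (isClosed_tsupport _) (hts n)
  · intro x hx
    have := (hts n hx).1
    exact Set.mem_Ioi.2 (by linarith)
  · intro n x
    have hg : g n x = ∫ t, (φ n).normed volume t * χ (x - t) := rfl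
    rw [hg]
    refine ⟨integral_nonneg fun t => mul_nonneg ((φ n).nonneg_normed t) (hχb _).1, ?_⟩
    rw [← (φ n).integral_normed (μ := volume)]
    refine integral_mono_of_nonneg ?_ (φ n).integrable_normed ?_
    · exact Eventually.of_forall fun t => mul_nonneg ((φ n).nonneg_normed t) (hχb _).1
    · exact Eventually.of_forall fun t =>
        mul_le_of_le_one_right ((φ n).nonneg_normed t) (hχb _).2
  · refine ContDiffBump.ae_convolution_tendsto_right_of_locallyIntegrable (K := 2) ?_ ?_
      hχ.locallyIntegrable
    · have h1 : Tendsto (fun n : ℕ => (n : ℝ) + 1) atTop atTop :=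
        tendsto_atTop_add_const_right _ _ tendsto_natCast_atTop_atTop
      exact h1.const_div_atTop (a / 4)
    · refine Eventually.of_forall fun n => ?_
      change a / 4 / ((n : ℝ) + 1) ≤ 2 * (a / 8 / ((n : ℝ) + 1))
      apply le_of_eq
      ring

theorem ind_mem (V : WHSpaceH W H) (a b : ℝ) (ha : 0 < a) (hab : a ≤ b) (A : Set ℝ)
    (hA : MeasurableSet A) (hAs : A ⊆ Set.Icc a b) (u : H) :
    ∃ F ∈ (tens V).topologicalClosure, V.toFun F =ᵐ[volume] A.indicator (fun _ => u) := by
  obtain ⟨g, hg1, hg2, hg3, hg4⟩ := exists_approx_ind a b ha A hA hAs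
  let f : ContDiffBump ((a + b) / 2) :=
    ⟨(b - a) / 2 + a / 4, (b - a) / 2 + a / 2, by linarith, by linarith⟩
  have hf : IsTestPlus (fun x => (f x : ℂ)) := bump_test _ f (by
    change (b - a) / 2 + a / 2 < (a + b) / 2
    linarith)
  have hf1 : ∀ x ∈ Set.Icc (a - a / 4) (b + a / 4), f x = 1 := by
    intro x hx
    apply f.one_of_mem_closedBall
    rw [Metric.mem_closedBall, Real.dist_eq, abs_le]
    change -((b - a) / 2 + a / 4) ≤ x - (a + b) / 2 ∧ x - (a + b) / 2 ≤ (b - a) / 2 + a / 4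
    constructor <;> linarith [hx.1, hx.2]
  obtain ⟨D, hD⟩ := V.tensor_mem _ (isTestPlusH_single hf u)
  choose G hG using fun n => V.tensor_mem _ (isTestPlusH_single (hg1 n) u)
  obtain ⟨F, hF, -⟩ := exists_of_norm_le V D (A.indicator (fun _ => u))
    (aestronglyMeasurable_const.indicator hA) (by
      filter_upwards [hD] with x hx
      rw [hx]
      by_cases hxA : x ∈ A
      · have := hAs hxA
        rw [hf1 x ⟨by linarith [this.1], by linarith [this.2]⟩]
        simp [hxA]
      · simp [hxA])
  refine ⟨F, ?_, hF⟩
  refine mem_closure_of_tendsto (dom_conv V D F G ?_ ?_)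
    (Eventually.of_forall fun n => ⟨_, isTestPlusH_single (hg1 n) u, hG n⟩)
  · intro n
    filter_upwards [hD, hG n, hF] with x h1 h2 h3
    rw [h1, h2, h3]
    have he : A.indicator (fun _ => u) x = ((A.indicator (fun _ => (1 : ℝ)) x : ℝ) : ℂ) • u := by
      by_cases hxA : x ∈ A <;> simp [hxA]
    rw [he, ← sub_smul, norm_smul, norm_smul, ← Complex.ofReal_sub, Complex.norm_real,
      Complex.norm_real]
    refine mul_le_mul_of_nonneg_right ?_ (norm_nonneg _)
    by_cases hx : x ∈ Set.Icc (a - a / 4) (b + a / 4)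
    · rw [hf1 x hx, norm_one, Real.norm_eq_abs, abs_le]
      have := hg2 n x
      by_cases hxA : x ∈ A
      · simp only [hxA, Set.indicator_of_mem]
        constructor <;> linarith
      · simp only [hxA, not_false_eq_true, Set.indicator_of_notMem]
        constructor <;> linarith
    · rw [hg3 n x hx]
      have hxA : x ∉ A := fun h => hx ⟨by linarith [(hAs h).1], by linarith [(hAs h).2]⟩
      simp [hxA]
  · filter_upwards [ae_all_iff.2 hG, hF, hg4] with x h1 h2 h3
    simp only [h1, h2]
    have he : A.indicator (fun _ => u) x = ((A.indicator (fun _ => (1 : ℝ)) x : ℝ) : ℂ) • u := by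
      by_cases hxA : x ∈ A <;> simp [hxA]
    rw [he]
    exact ((Complex.continuous_ofReal.tendsto _).comp h3).smul_const u

theorem simple_mem (V : WHSpaceH W H) (a b : ℝ) (ha : 0 < a) (hab : a ≤ b)
    (s : SimpleFunc ℝ H) (hs : ∀ x, x ∉ Set.Icc a b → s x = 0) :
    ∃ F ∈ (tens V).topologicalClosure, V.toFun F =ᵐ[volume] s := by
  classical
  have h1 : ∀ y : H, ∃ F ∈ (tens V).topologicalClosure,
      V.toFun F =ᵐ[volume] (s ⁻¹' {y}).indicator (fun _ => y) := by
    intro y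
    by_cases hy : y = 0
    · refine ⟨0, zero_mem _, ?_⟩
      rw [map_zero, hy]
      filter_upwards with x
      simp
    · refine ind_mem V a b ha hab _ (s.measurableSet_fiber y) ?_ y
      intro x hx
      by_contra h
      exact hy (hx.symm.trans (hs x h))
  choose P hP hP' using h1
  refine ⟨∑ y ∈ s.range, P y, sum_mem fun y _ => hP y, ?_⟩
  rw [map_sum]
  have hall : ∀ᵐ x, ∀ y ∈ s.range, V.toFun (P y) x = (s ⁻¹' {y}).indicator (fun _ => y) x :=
    (Finset.eventually_all s.range).2 fun y _ => hP' y
  filter_upwards [hall] with x hx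
  rw [Finset.sum_apply, Finset.sum_congr rfl hx]
  rw [Finset.sum_eq_single (s x)]
  · simp
  · intro y _ hy
    rw [Set.indicator_of_notMem]
    exact fun h => hy h.symm
  · intro h
    exact absurd (s.mem_range_self x) h

theorem cut_mem [TopologicalSpace.SeparableSpace H] (V : WHSpaceH W H) (a b : ℝ) (ha : 0 < a)
    (hab : a ≤ b) (F : V.Eb) (hF : ∀ᵐ x, x ∉ Set.Icc a b → V.toFun F x = 0) :
    F ∈ (tens V).topologicalClosure := by
  borelize H
  have := UniformSpace.secondCountable_of_separable H
  let f : ℝ → H := (Set.Icc a b).indicator ((V.meas F).mk _)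
  have hf : Measurable f :=
    ((V.meas F).stronglyMeasurable_mk.indicator measurableSet_Icc).measurable
  have hFf : V.toFun F =ᵐ[volume] f := by
    filter_upwards [hF, (V.meas F).ae_eq_mk] with x h1 h2
    by_cases hx : x ∈ Set.Icc a b
    · rw [h2]
      simp only [f, Set.indicator_of_mem hx]
    · rw [h1 hx]
      simp only [f, Set.indicator_of_notMem hx]
  let s : ℕ → SimpleFunc ℝ H := fun n => SimpleFunc.approxOn f hf Set.univ 0 (Set.mem_univ _) n
  have hs : ∀ n x, ‖s n x‖ ≤ ‖f x‖ + ‖f x‖ := fun n x =>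
    SimpleFunc.norm_approxOn_zero_le hf (Set.mem_univ _) x n
  have hlim : ∀ x, Tendsto (fun n => s n x) atTop (𝓝 (f x)) := fun x =>
    SimpleFunc.tendsto_approxOn hf (Set.mem_univ _) (by simp)
  choose G hG hG' using fun n => simple_mem V a b ha hab (s n) (by
    intro x hx
    have h1 := hs n x
    have h2 : f x = 0 := by simp only [f, Set.indicator_of_notMem hx]
    rw [h2, norm_zero, add_zero] at h1
    exact norm_le_zero_iff.1 h1)
  refine (AddSubmonoid.isClosed_topologicalClosure _).mem_of_tendsto
    (dom_conv V ((3 : ℂ) • F) F G ?_ ?_) (Eventually.of_forall hG)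
  · intro n
    rw [map_smul]
    filter_upwards [hFf, hG' n] with x h1 h2
    rw [Pi.smul_apply, h1, h2, norm_smul]
    have := norm_sub_le (s n x) (f x)
    have := hs n x
    norm_num
    linarith
  · filter_upwards [hFf, ae_all_iff.2 hG'] with x h1 h2
    simp only [h1, h2]
    exact hlim x

theorem all_mem [TopologicalSpace.SeparableSpace H] (V : WHSpaceH W H) (F : V.Eb) :
    F ∈ (tens V).topologicalClosure := by
  let A : ℕ → Set ℝ := fun n => (Set.Icc (1 / ((n : ℝ) + 1)) ((n : ℝ) + 1))
  choose G hG using fun n => exists_indicator V F (A n) measurableSet_Icc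
  refine (AddSubmonoid.isClosed_topologicalClosure _).mem_of_tendsto
    (dom_conv V F F G ?_ ?_) (Eventually.of_forall fun n => ?_)
  · intro n
    filter_upwards [hG n] with x h1
    rw [h1]
    by_cases hx : x ∈ A n <;> simp [hx]
  · have hne : ∀ᵐ x : ℝ, x ≠ 0 := by simp [ae_iff]
    filter_upwards [ae_all_iff.2 hG, V.supp F, hne] with x h1 h2 h3
    simp only [h1]
    rcases lt_or_gt_of_ne h3 with h | h
    · rw [h2 h]
      refine tendsto_const_nhds.congr fun n => ?_
      by_cases hx : x ∈ A n <;> simp [hx, h2 h]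
    · have e1 : ∀ᶠ n : ℕ in atTop, 1 / ((n : ℝ) + 1) < x :=
        tendsto_one_div_add_atTop_nhds_zero_nat.eventually_lt_const h
      have e2 : ∀ᶠ n : ℕ in atTop, x ≤ (n : ℝ) :=
        tendsto_natCast_atTop_atTop.eventually_ge_atTop x
      refine tendsto_const_nhds.congr' ?_
      filter_upwards [e1, e2] with n a1 a2
      rw [Set.indicator_of_mem]
      exact ⟨a1.le, by linarith⟩
  · refine cut_mem V (1 / ((n : ℝ) + 1)) ((n : ℝ) + 1) (by positivity) ?_ (G n) ?_
    · have h0 : (0 : ℝ) ≤ n := n.cast_nonneg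
      rw [div_le_iff₀ (by positivity)]
      nlinarith
    · filter_upwards [hG n] with x h1 hx
      rw [h1]
      exact Set.indicator_of_notMem hx _

end Dense

/-- `C_c^∞((0,∞)) ⊗ H` is dense in `Ē`. -/
theorem tensor_dense (W : WHSpace) (H : Type) [NormedAddCommGroup H]
    [InnerProductSpace ℂ H] [CompleteSpace H] [TopologicalSpace.SeparableSpace H]
    [Nontrivial H] (V : WHSpaceH W H) :
    Dense {F : V.Eb | ∃ G : ℝ → H, IsTestPlusH G ∧ V.toFun F =ᵐ[volume] G} := by
  intro F
  exact all_mem V F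
end
end
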